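/- arXiv:2101.12675 — 12 statements merged into one kernel-verified Lean document; each statement's English description precedes it below -/
import Mathlib

section
/- Let X be a set, let A, B : ℕ × ℕ × X → Prop be predicates, and let φ₁, φ₂ : ℕ × (ℕ→ℕ) → ℕ be monotone functionals such that (i) for all k ∈ ℕ and all monotone f : ℕ → ℕ there are n ≤ φ₁(k,f) and x ∈ X with A(k,m,x) for all m ∈ [n, f(n)], and (ii) for all k ∈ ℕ and all monotone f : ℕ → ℕ there are n ≤ φ₂(k,f) and x ∈ X with B(k,m,x) for all m ∈ [n, f(n)]. Then for all k ∈ ℕ and all monotone f : ℕ → ℕ there are n ≤ Φ̄(k,f) and x, x' ∈ X such that for all m ∈ [n, f(n)] both A(k,m,x) and B(k,m,x') hold, where Φ̄(k,f) := max{θ, φ₂(k, f̃[θ])} with f̄(m) := f̃[φ₂(k, f̃[m])](m) and θ := φ₁(k, f̄). -/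
/-!
Write `f_M` for `m ↦ f (max m M)`, `F` for `m ↦ f (max m (φ₂ k f_m))`, and `θ = φ₁ k F`.
Applying `h1` to `F` gives `n₁ ≤ θ` with `A` on `[n₁, f (max n₁ (φ₂ k f_{n₁}))]`; applying `h2` to
`f_{n₁}` gives `n₂ ≤ φ₂ k f_{n₁}` with `B` on `[n₂, f (max n₂ n₁)]`. For `n = max n₁ n₂` the interval
`[n, f n]` lies in both. Monotonicity of `φ₂` makes `M ↦ φ₂ k f_M` nondecreasing, which gives both
the monotonicity of `F` and the bound `n₂ ≤ φ₂ k f_θ`.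
-/

/-- `g ≤* f`: strong majorizability. -/
def StrongMaj (g f : ℕ → ℕ) : Prop :=
  ∀ m n : ℕ, m ≤ n → g m ≤ f n ∧ f m ≤ f n

/-- A functional `φ : ℕ × (ℕ→ℕ) → ℕ` is monotone. -/
def MonoFunctional (φ : ℕ → (ℕ → ℕ) → ℕ) : Prop :=
  ∀ (m n : ℕ) (f g : ℕ → ℕ), m ≤ n → StrongMaj g f → φ m g ≤ φ n f

theorem stmt0 {X : Type*} (A B : ℕ → ℕ → X → Prop)
    (φ₁ φ₂ : ℕ → (ℕ → ℕ) → ℕ)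
    (hφ₁ : MonoFunctional φ₁) (hφ₂ : MonoFunctional φ₂)
    (h1 : ∀ (k : ℕ) (f : ℕ → ℕ), Monotone f →
      ∃ n ≤ φ₁ k f, ∃ x : X, ∀ m ∈ Set.Icc n (f n), A k m x)
    (h2 : ∀ (k : ℕ) (f : ℕ → ℕ), Monotone f →
      ∃ n ≤ φ₂ k f, ∃ x : X, ∀ m ∈ Set.Icc n (f n), B k m x)
    (k : ℕ) (f : ℕ → ℕ) (hf : Monotone f) :
    ∃ n ≤ max (φ₁ k (fun m => f (max m (φ₂ k (fun m' => f (max m' m))))))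
        (φ₂ k (fun m' => f (max m'
          (φ₁ k (fun m => f (max m (φ₂ k (fun m'' => f (max m'' m))))))))),
      ∃ x x' : X, ∀ m ∈ Set.Icc n (f n), A k m x ∧ B k m x' := by
  have maj : ∀ a b : ℕ, a ≤ b →
      φ₂ k (fun m => f (max m a)) ≤ φ₂ k (fun m => f (max m b)) := fun a b hab =>
    hφ₂ k k _ _ le_rfl fun _ _ hmn =>
      ⟨hf (max_le_max hmn hab), hf (max_le_max hmn le_rfl)⟩
  obtain ⟨n₁, hn₁, x, hx⟩ := h1 k (fun m => f (max m (φ₂ k (fun m' => f (max m' m)))))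
    fun a b hab => hf (max_le_max hab (maj a b hab))
  obtain ⟨n₂, hn₂, x', hx'⟩ := h2 k (fun m' => f (max m' n₁))
    fun a b hab => hf (max_le_max hab le_rfl)
  refine ⟨max n₁ n₂, max_le_max hn₁ (hn₂.trans (maj _ _ hn₁)), x, x', fun m hm => ⟨?_, ?_⟩⟩
  · exact hx m ⟨(le_max_left _ _).trans hm.1, hm.2.trans (hf (max_le_max le_rfl hn₂))⟩
  · exact hx' m ⟨(le_max_right _ _).trans hm.1, hm.2.trans (hf (max_comm n₁ n₂).le)⟩
end

section
/- Let X be a set, let A : ℕ × ℕ × X → Prop be a predicate, and let ψ : ℕ × (ℕ→ℕ) → ℕ be a monotone functional such that for all k ∈ ℕ and all monotone f : ℕ → ℕ there are n ≤ ψ(k,f) and x ∈ X with A(k,2m,x) and A(k,2m+1,x) for all m ∈ [n, f(n)]. Then for all k ∈ ℕ and all monotone f : ℕ → ℕ there are n ≤ Ψ(k,f) and x ∈ X with A(k,m,x) for all m ∈ [n, f(n)], where Ψ(k,f) := 2ψ(k, g_f) + 1 and g_f(m) := f(2m+1). -/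
theorem stmt1 {X : Type*} (A : ℕ → ℕ → X → Prop)
    (ψ : ℕ → (ℕ → ℕ) → ℕ) (hψ : MonoFunctional ψ)
    (h : ∀ (k : ℕ) (f : ℕ → ℕ), Monotone f →
      ∃ n ≤ ψ k f, ∃ x : X, ∀ m ∈ Set.Icc n (f n), A k (2*m) x ∧ A k (2*m+1) x)
    (k : ℕ) (f : ℕ → ℕ) (hf : Monotone f) :
    ∃ n ≤ 2 * ψ k (fun m => f (2*m+1)) + 1, ∃ x : X,
      ∀ m ∈ Set.Icc n (f n), A k m x := by
  obtain ⟨n, hn, x, hx⟩ := h k (fun m => f (2*m+1)) (fun a b hab => hf (by omega))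
  -- Every `m ∈ [2n+1, f (2n+1)]` has `m / 2 ∈ [n, f (2n+1)]`, and is `2(m/2)` or `2(m/2)+1`.
  refine ⟨2*n+1, by omega, x, fun m hm => ?_⟩
  obtain ⟨h1, h2⟩ := Set.mem_Icc.mp hm
  obtain ⟨he, ho⟩ := hx (m/2) (Set.mem_Icc.mpr ⟨by omega, (Nat.div_le_self m 2).trans h2⟩)
  rcases Nat.mod_two_eq_zero_or_one m with h0 | h0
  · rwa [show 2*(m/2) = m by omega] at he
  · rwa [show 2*(m/2)+1 = m by omega] at ho
end

section
/- Let (s_n) be a sequence of nonnegative real numbers and M ∈ ℕ a positive upper bound on (s_n) (s_n ≤ M for all n). Let (α_n), (λ_n) ⊂ [0,1], (b_n), (c_n) ⊂ ℝ and (d_n) ⊂ [0,∞). Assume A is a rate of divergence for Σ α_n = ∞, B is a rate for limsup b_n ≤ 0, C is a rate for limsup c_n ≤ 0, and D is a Cauchy rate for Σ d_n < ∞. If s_{m+1} ≤ (1−α_m)(1−λ_m)s_m + α_m b_m + λ_m c_m + d_m for all m ∈ ℕ, then s_n → 0 with rate of convergence ρ₁(k) := A(ñ + ⌈ln(4M(k+1))⌉)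 + 1, where ñ := max{B(4k+3), C(4k+3), D(4k+3)+1}. -/
/-!
Put `ε = 1 / (4(k+1))` and let `N` be the maximum of the three indices at level `4k+3`, so that
from `N` on both `b` and `c` are at most `ε` and the tail sums of `d` are at most `ε`. Unrolling
the recursion from `N` (`unrolled_bound`) gives
`s n ≤ exp (-∑_{N ≤ i < n} α i) * M + 2ε + ∑_{N ≤ i < n} d i`.
For `n` beyond the claimed rate, `∑_{i < n} α i ≥ N + log (4M(k+1))`; the first `N` terms contribute
at most `N` because `α ≤ 1`, so the exponential term is at most `ε` and the whole bound is at most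
`4ε = 1 / (k+1)`.
-/

/-- The recursion unrolled from `N`. The constant `2ε` is preserved by each step because
`2(1-a)(1-l) + a + l ≤ 2` for `a, l ∈ [0,1]`, which amounts to `2al ≤ a + l`. -/
theorem unrolled_bound (s α lam b c d : ℕ → ℝ) (K ε : ℝ) (N : ℕ) (hK : 0 ≤ K) (hε : 0 ≤ ε)
    (hsN : s N ≤ K)
    (hα : ∀ n, α n ∈ Set.Icc (0:ℝ) 1) (hlam : ∀ n, lam n ∈ Set.Icc (0:ℝ) 1)
    (hd : ∀ n, 0 ≤ d n)
    (hb : ∀ n ≥ N, b n ≤ ε) (hc : ∀ n ≥ N, c n ≤ ε)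
    (hrec : ∀ m, s (m+1) ≤ (1 - α m)*(1 - lam m)*s m + α m * b m + lam m * c m + d m) :
    ∀ n ≥ N, s n ≤ Real.exp (-∑ i ∈ Finset.Ico N n, α i) * K + 2 * ε
      + ∑ i ∈ Finset.Ico N n, d i := by
  intro n hn
  induction n, hn using Nat.le_induction with
  | base => simp; linarith
  | succ n hn ih =>
    rw [Finset.sum_Ico_succ_top hn, Finset.sum_Ico_succ_top hn, neg_add, Real.exp_add]
    obtain ⟨ha0, ha1⟩ := hα n
    obtain ⟨hl0, hl1⟩ := hlam n
    have hS : 0 ≤ ∑ i ∈ Finset.Ico N n, d i := Finset.sum_nonneg fun i _ => hd i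
    set S := ∑ i ∈ Finset.Ico N n, d i
    have hP : 0 ≤ Real.exp (-∑ i ∈ Finset.Ico N n, α i) * K := by positivity
    have hexp : 1 - α n ≤ Real.exp (-α n) := by
      have := Real.add_one_le_exp (-α n)
      linarith
    have hcoef0 : 0 ≤ (1 - α n) * (1 - lam n) :=
      mul_nonneg (by linarith) (by linarith)
    have hcoef1 : (1 - α n) * (1 - lam n) ≤ 1 - α n :=
      mul_le_of_le_one_right (by linarith) (by linarith)
    have h1 := mul_le_mul_of_nonneg_left ih hcoef0
    have h2 := mul_le_mul_of_nonneg_left (hb n hn) ha0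
    have h3 := mul_le_mul_of_nonneg_left (hc n hn) hl0
    have h4 := mul_le_mul_of_nonneg_right (hcoef1.trans hexp) hP
    have h5 : (1 - α n) * (1 - lam n) * S ≤ S :=
      mul_le_of_le_one_left hS (by linarith)
    have h6 : (2 * ((1 - α n) * (1 - lam n)) + α n + lam n) * ε ≤ 2 * ε := by
      apply mul_le_mul_of_nonneg_right _ hε
      nlinarith [mul_nonneg ha0 (sub_nonneg.2 hl1), mul_nonneg hl0 (sub_nonneg.2 ha1)]
    have h7 := hrec n
    linarith

theorem stmt2 (s α lam b c d : ℕ → ℝ) (M : ℕ) (hM : 0 < M)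
    (hs_nonneg : ∀ n, 0 ≤ s n) (hs_bd : ∀ n, s n ≤ (M : ℝ))
    (hα : ∀ n, α n ∈ Set.Icc (0:ℝ) 1) (hlam : ∀ n, lam n ∈ Set.Icc (0:ℝ) 1)
    (hd : ∀ n, 0 ≤ d n)
    (A B C D : ℕ → ℕ)
    (hA : ∀ k n : ℕ, (k : ℝ) ≤ ∑ i ∈ Finset.range (A k + n + 1), α i)
    (hB : ∀ k : ℕ, ∀ n ≥ B k, b n ≤ 1/((k:ℝ)+1))
    (hC : ∀ k : ℕ, ∀ n ≥ C k, c n ≤ 1/((k:ℝ)+1))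
    (hD : ∀ k n : ℕ, ∑ i ∈ Finset.Ico (D k + 1) (D k + n + 1), d i ≤ 1/((k:ℝ)+1))
    (hrec : ∀ m, s (m+1) ≤ (1 - α m)*(1 - lam m)*s m + α m * b m + lam m * c m + d m)
    (k : ℕ) :
    ∀ n ≥ A (max (max (B (4*k+3)) (C (4*k+3))) (D (4*k+3) + 1)
          + ⌈Real.log (4*(M:ℝ)*((k:ℝ)+1))⌉₊) + 1,
      |s n| ≤ 1/((k:ℝ)+1) := by
  intro n hn
  set N := max (max (B (4*k+3)) (C (4*k+3))) (D (4*k+3) + 1) with hN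
  set L := ⌈Real.log (4*(M:ℝ)*((k:ℝ)+1))⌉₊ with hL
  have hε4 : 1 / (((4*k+3 : ℕ) : ℝ) + 1) = 1 / (4 * ((k:ℝ) + 1)) := by
    push_cast
    ring
  have hsum_le : ∀ m : ℕ, ∑ i ∈ Finset.range m, α i ≤ m := fun m => by
    simpa using Finset.sum_le_card_nsmul (Finset.range m) α 1 fun i _ => (hα i).2
  have hdiv : ((N + L : ℕ) : ℝ) ≤ ∑ i ∈ Finset.range n, α i := by
    have h := hA (N + L) (n - (A (N + L) + 1))
    rwa [show A (N + L) + (n - (A (N + L) + 1)) + 1 = n by omega] at h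
  have hNn : N ≤ n := by
    have h : N + L ≤ n := by exact_mod_cast hdiv.trans (hsum_le n)
    omega
  have hlog : Real.log (4*(M:ℝ)*((k:ℝ)+1)) ≤ ∑ i ∈ Finset.Ico N n, α i := by
    have h1 := Finset.sum_range_add_sum_Ico α hNn
    have h2 := hsum_le N
    have h3 : Real.log (4*(M:ℝ)*((k:ℝ)+1)) ≤ L := Nat.le_ceil _
    push_cast at hdiv
    linarith
  have hM' : (0:ℝ) < M := by exact_mod_cast hM
  have hexp : Real.exp (-∑ i ∈ Finset.Ico N n, α i) * M ≤ 1 / (4 * ((k:ℝ) + 1)) := by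
    have h : Real.exp (-∑ i ∈ Finset.Ico N n, α i) ≤ (4*(M:ℝ)*((k:ℝ)+1))⁻¹ := by
      rw [← Real.exp_log (show 0 < 4*(M:ℝ)*((k:ℝ)+1) by positivity), ← Real.exp_neg,
        Real.exp_le_exp]
      linarith
    refine (mul_le_mul_of_nonneg_right h hM'.le).trans_eq ?_
    field_simp
  have hdsum : ∑ i ∈ Finset.Ico N n, d i ≤ 1 / (4 * ((k:ℝ) + 1)) := by
    rw [← hε4]
    refine le_trans (Finset.sum_le_sum_of_subset_of_nonneg ?_ fun i _ _ => hd i) (hD (4*k+3) n)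
    exact Finset.Ico_subset_Ico (le_max_right _ _) (by omega)
  have hmain := unrolled_bound s α lam b c d M (1 / (4 * ((k:ℝ) + 1))) N hM'.le (by positivity)
    (hs_bd N) hα hlam hd (fun m hm => hε4 ▸ hB (4*k+3) m (by omega))
    (fun m hm => hε4 ▸ hC (4*k+3) m (by omega)) hrec n hNn
  rw [abs_of_nonneg (hs_nonneg n)]
  have h4 : 4 * (1 / (4 * ((k:ℝ) + 1))) = 1 / ((k:ℝ) + 1) := by
    field_simp
  linarith
end

section
/- Let (s_n) be a sequence of real numbers and M ∈ ℕ a positive upper bound on (s_n) (s_n ≤ M for all n). Let (α_n), (λ_n) ⊂ [0,1] and (v_n), (b_n), (c_n) ⊂ ℝ, and let A be a monotone (nondecreasing) rate of divergence for Σ α_n = ∞. Let k, n, p ∈ ℕ be such that for all m ∈ [n, p]: v_m ≤ 1/(4(k+1)(p+1)), b_m ≤ 1/(4(k+1)) and c_m ≤ 1/(4(k+1)); and suppose s_{m+1} ≤ (1−α_m)(1−λ_m)(s_m + v_m) + α_m b_m + λ_m c_m for all m ∈ ℕ. Then s_m ≤ 1/(k+1) for all m ∈ [σ₁(k,n), p],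 where σ₁(k,n) := A(n + ⌈ln(4M(k+1))⌉) + 1. -/
/-!
Write `e = 1/(4(k+1))` and `d = e/(p+1)`. Since `a + l ≤ 2 (1 - (1-a)(1-l))` on `[0,1]²`, the
terms `α m * b m + lam m * c m` contribute at most the complementary weight of the convex
combination applied to the level `2e`. Hence, by induction on `j`,
`s (n+j) ≤ 2e + M exp(-∑_{n ≤ i < n+j} α i) + j d` as long as `n + j ≤ p` (`decay_step` is the
induction step). For `n + j` beyond the threshold the sum of all `α i` with `i < n + j` is at
least `n + log(4M(k+1))`, and the first `n` terms account for at most `n` of it, so the exponential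
term is at most `e`; the last term is at most `e` because `j ≤ p`. The total is `4e = 1/(k+1)`.
-/

/-- One step of the recursion preserves a bound of the form `2e + E + D`, where the part `E`
decays by the factor `exp (-a)` and the part `D` accumulates the error `d`. -/
lemma decay_step {a l x w B C e d E D : ℝ} (ha : a ∈ Set.Icc (0:ℝ) 1)
    (hl : l ∈ Set.Icc (0:ℝ) 1) (he : 0 ≤ e) (hd : 0 ≤ d) (hE : 0 ≤ E) (hD : 0 ≤ D)
    (hx : x ≤ 2*e + E + D) (hw : w ≤ d) (hB : B ≤ e) (hC : C ≤ e) :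
    (1 - a)*(1 - l)*(x + w) + a*B + l*C ≤ 2*e + E*Real.exp (-a) + (D + d) := by
  obtain ⟨ha0, ha1⟩ := ha
  obtain ⟨hl0, hl1⟩ := hl
  have hq0 : 0 ≤ (1 - a)*(1 - l) := mul_nonneg (by linarith) (by linarith)
  have hq1 : (1 - a)*(1 - l) ≤ 1 - a := mul_le_of_le_one_right (by linarith) (by linarith)
  have hexp : (1 - a)*(1 - l) ≤ Real.exp (-a) := by
    have := Real.add_one_le_exp (-a)
    linarith
  have h1 : (1 - a)*(1 - l)*(x + w) ≤ (1 - a)*(1 - l)*(2*e + E + D + d) :=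
    mul_le_mul_of_nonneg_left (by linarith) hq0
  have h2 : (1 - a)*(1 - l)*E ≤ Real.exp (-a)*E := mul_le_mul_of_nonneg_right hexp hE
  have h3 : (1 - a)*(1 - l)*(D + d) ≤ D + d :=
    mul_le_of_le_one_left (by linarith) (by linarith)
  have h4 : a*B ≤ a*e := mul_le_mul_of_nonneg_left hB ha0
  have h5 : l*C ≤ l*e := mul_le_mul_of_nonneg_left hC hl0
  -- `2(1 - (1-a)(1-l)) - (a + l) = a(1-l) + l(1-a)`
  have h6 : 0 ≤ (a*(1 - l) + l*(1 - a))*e :=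
    mul_nonneg (add_nonneg (mul_nonneg ha0 (by linarith)) (mul_nonneg hl0 (by linarith))) he
  linarith

theorem stmt3 (s α lam v b c : ℕ → ℝ) (M : ℕ) (hM : 0 < M)
    (hs_bd : ∀ n, s n ≤ (M : ℝ))
    (hα : ∀ n, α n ∈ Set.Icc (0:ℝ) 1) (hlam : ∀ n, lam n ∈ Set.Icc (0:ℝ) 1)
    (A : ℕ → ℕ) (hAmono : Monotone A)
    (hA : ∀ k n : ℕ, (k : ℝ) ≤ ∑ i ∈ Finset.range (A k + n + 1), α i)
    (k n p : ℕ)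
    (hsmall : ∀ m ∈ Set.Icc n p,
      v m ≤ 1/(4*((k:ℝ)+1)*((p:ℝ)+1)) ∧ b m ≤ 1/(4*((k:ℝ)+1)) ∧ c m ≤ 1/(4*((k:ℝ)+1)))
    (hrec : ∀ m, s (m+1) ≤ (1 - α m)*(1 - lam m)*(s m + v m) + α m * b m + lam m * c m) :
    ∀ m ∈ Set.Icc (A (n + ⌈Real.log (4*(M:ℝ)*((k:ℝ)+1))⌉₊) + 1) p,
      s m ≤ 1/((k:ℝ)+1) := by
  rintro m ⟨hm, hmp⟩
  set L := ⌈Real.log (4*(M:ℝ)*((k:ℝ)+1))⌉₊ with hL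
  have hM' : (0:ℝ) < M := by exact_mod_cast hM
  have hk : (0:ℝ) < (k:ℝ) + 1 := by positivity
  have hp : (0:ℝ) < (p:ℝ) + 1 := by positivity
  obtain ⟨e, he⟩ : ∃ e, e = 1/(4*((k:ℝ)+1)) := ⟨_, rfl⟩
  obtain ⟨d, hd⟩ : ∃ d, d = 1/(4*((k:ℝ)+1)*((p:ℝ)+1)) := ⟨_, rfl⟩
  rw [← he, ← hd] at hsmall
  have he0 : 0 ≤ e := by rw [he]; positivity
  have hd0 : 0 ≤ d := by rw [hd]; positivity
  have hsum_le : ∀ j, ∑ i ∈ Finset.range j, α i ≤ j := fun j => by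
    simpa using Finset.sum_le_card_nsmul (Finset.range j) α 1 fun i _ => (hα i).2
  have key : ∀ j, n + j ≤ p →
      s (n + j) ≤ 2*e + M * Real.exp (-(∑ i ∈ Finset.range j, α (n + i))) + j*d := by
    intro j
    induction j with
    | zero =>
      intro _
      have := hs_bd n
      simp
      linarith
    | succ j ih =>
      intro hj
      obtain ⟨hv, hb, hc⟩ := hsmall (n + j) ⟨by omega, by omega⟩
      have := decay_step (hα (n + j)) (hlam (n + j)) he0 hd0 (by positivity) (by positivity)
        (ih (by omega)) hv hb hc
      refine (hrec (n + j)).trans (this.trans (le_of_eq ?_))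
      rw [Finset.sum_range_succ, neg_add, Real.exp_add]
      push_cast
      ring
  have hAm : ((n + L : ℕ) : ℝ) ≤ ∑ i ∈ Finset.range m, α i := by
    have := hA (n + L) (m - (A (n + L) + 1))
    rwa [show A (n + L) + (m - (A (n + L) + 1)) + 1 = m by omega] at this
  have hnm : n ≤ m := by
    have : n + L ≤ m := by exact_mod_cast hAm.trans (hsum_le m)
    omega
  obtain ⟨j, rfl⟩ := Nat.exists_eq_add_of_le hnm
  have hLsum : Real.log (4*(M:ℝ)*((k:ℝ)+1)) ≤ ∑ i ∈ Finset.range j, α (n + i) := by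
    have h1 := hsum_le n
    have h2 := Nat.le_ceil (Real.log (4*(M:ℝ)*((k:ℝ)+1)))
    rw [Finset.sum_range_add] at hAm
    push_cast at hAm
    linarith
  have hexp : M * Real.exp (-(∑ i ∈ Finset.range j, α (n + i))) ≤ e := by
    calc M * Real.exp (-(∑ i ∈ Finset.range j, α (n + i)))
        ≤ M * Real.exp (-Real.log (4*(M:ℝ)*((k:ℝ)+1))) := by gcongr
      _ = e := by
        rw [Real.exp_neg, Real.exp_log (by positivity), he]
        field_simp
  have hjd : j*d ≤ e := by
    have hjp : (j:ℝ) ≤ (p:ℝ) + 1 := by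
      have : j ≤ p + 1 := by omega
      exact_mod_cast this
    calc j*d ≤ ((p:ℝ) + 1)*d := by gcongr
      _ = e := by rw [hd, he]; field_simp
  have h4 : 1/((k:ℝ)+1) = 4*e := by rw [he]; field_simp
  rw [h4]
  linarith [key j hmp]
end

section
/- Let (s_n) be a sequence of nonnegative real numbers and M ∈ ℕ a positive upper bound on (s_n) (s_n ≤ M for all n). Let (α_n), (λ_n) ⊂ [0,1], (b_n), (c_n) ⊂ ℝ and (d_n) ⊂ [0,∞). Assume A' : ℕ × ℕ → ℕ satisfies condition (Q') for (α_n), B is a rate for limsup b_n ≤ 0, C is a rate for limsup c_n ≤ 0, and D is a Cauchy rate for Σ d_n < ∞. If s_{m+1} ≤ (1−α_m)(1−λ_m)s_m + α_m b_m + λ_m c_m + d_m for all m ∈ ℕ, then s_n → 0 with rate of convergence ρ₂(k) := A'(ñ, 4M(k+1)−1) + ñ + 1, where ñ := max{B(4k+3), C(4k+3), D(4k+3)+1}. -/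
/-!
Put `μ = 1 - (1 - α) (1 - λ) = α + λ - α λ`. Since `α, λ ∈ [0,1]`, `α + λ ≤ 2 μ`, so as soon as
`b_m, c_m ≤ ε` the recursion gives `s_{m+1} ≤ (1 - μ_m) s_m + μ_m (2 ε) + d_m`, where moreover
`1 - μ_m ≤ 1 - α_m`. Iterating from `N` yields
`s_n ≤ M ∏_{N ≤ i < n} (1 - α_i) + 2 ε + ∑_{N ≤ i < n} d_i` (`le_prod_add_sum`).
With `ε = 1 / (4 (k + 1))` and `N`, `n` as in the theorem, the product term and the sum are each at
most `ε`, for a total of `4 ε = 1 / (k + 1)`.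
-/

/-- Iterated form of the recursion; the factor `2` in `2 * ε` comes from `α + λ ≤ 2 (α + λ - α λ)`. -/
lemma le_prod_add_sum (s α lam b c d : ℕ → ℝ) (K ε : ℝ) (N : ℕ) (hK : 0 ≤ K) (hε : 0 ≤ ε)
    (hsN : s N ≤ K)
    (hα : ∀ n, α n ∈ Set.Icc (0:ℝ) 1) (hlam : ∀ n, lam n ∈ Set.Icc (0:ℝ) 1)
    (hd : ∀ n, 0 ≤ d n) (hb : ∀ n ≥ N, b n ≤ ε) (hc : ∀ n ≥ N, c n ≤ ε)
    (hrec : ∀ m, s (m+1) ≤ (1 - α m)*(1 - lam m)*s m + α m * b m + lam m * c m + d m)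
    (n : ℕ) (hn : N ≤ n) :
    s n ≤ K * ∏ i ∈ Finset.Ico N n, (1 - α i) + 2 * ε + ∑ i ∈ Finset.Ico N n, d i := by
  induction n, hn using Nat.le_induction with
  | base => simp; linarith
  | succ n hn ih =>
    rw [Finset.prod_Ico_succ_top hn, Finset.sum_Ico_succ_top hn]
    have hP : 0 ≤ ∏ i ∈ Finset.Ico N n, (1 - α i) :=
      Finset.prod_nonneg fun i _ => sub_nonneg.2 (hα i).2
    have hS : 0 ≤ ∑ i ∈ Finset.Ico N n, d i := Finset.sum_nonneg fun i _ => hd i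
    have hr := hrec n
    obtain ⟨ha0, ha1⟩ := hα n
    obtain ⟨hl0, hl1⟩ := hlam n
    have hbn := mul_le_mul_of_nonneg_left (hb n hn) ha0
    have hcn := mul_le_mul_of_nonneg_left (hc n hn) hl0
    generalize ∏ i ∈ Finset.Ico N n, (1 - α i) = P at *
    generalize ∑ i ∈ Finset.Ico N n, d i = S at *
    have hq0 : 0 ≤ (1 - α n) * (1 - lam n) :=
      mul_nonneg (sub_nonneg.2 ha1) (sub_nonneg.2 hl1)
    have hqα : (1 - α n) * (1 - lam n) ≤ 1 - α n :=
      mul_le_of_le_one_right (sub_nonneg.2 ha1) (by linarith)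
    have hq1 : (1 - α n) * (1 - lam n) ≤ 1 := by linarith
    have hμ : α n + lam n ≤ 2 * (1 - (1 - α n) * (1 - lam n)) := by
      nlinarith [mul_nonneg ha0 (sub_nonneg.2 hl1), mul_nonneg hl0 (sub_nonneg.2 ha1)]
    have hμε := mul_le_mul_of_nonneg_right hμ hε
    have hih := mul_le_mul_of_nonneg_left ih hq0
    have hKP := mul_le_mul_of_nonneg_right hqα (mul_nonneg hK hP)
    have hqS := mul_le_mul_of_nonneg_right hq1 hS
    linarith

theorem stmt4 (s α lam b c d : ℕ → ℝ) (M : ℕ) (hM : 0 < M)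
    (hs_nonneg : ∀ n, 0 ≤ s n) (hs_bd : ∀ n, s n ≤ (M : ℝ))
    (hα : ∀ n, α n ∈ Set.Icc (0:ℝ) 1) (hlam : ∀ n, lam n ∈ Set.Icc (0:ℝ) 1)
    (hd : ∀ n, 0 ≤ d n)
    (A' : ℕ → ℕ → ℕ) (B C D : ℕ → ℕ)
    (hA'mono : ∀ m m' k k' : ℕ, m ≤ m' → k ≤ k' → A' m k ≤ A' m' k')
    (hA' : ∀ k m : ℕ, ∏ i ∈ Finset.Icc m (A' m k), (1 - α i) ≤ 1/((k:ℝ)+1))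
    (hB : ∀ k : ℕ, ∀ n ≥ B k, b n ≤ 1/((k:ℝ)+1))
    (hC : ∀ k : ℕ, ∀ n ≥ C k, c n ≤ 1/((k:ℝ)+1))
    (hD : ∀ k n : ℕ, ∑ i ∈ Finset.Ico (D k + 1) (D k + n + 1), d i ≤ 1/((k:ℝ)+1))
    (hrec : ∀ m, s (m+1) ≤ (1 - α m)*(1 - lam m)*s m + α m * b m + lam m * c m + d m)
    (k : ℕ) :
    ∀ n ≥ A' (max (max (B (4*k+3)) (C (4*k+3))) (D (4*k+3) + 1)) (4*M*(k+1) - 1)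
          + max (max (B (4*k+3)) (C (4*k+3))) (D (4*k+3) + 1) + 1,
      |s n| ≤ 1/((k:ℝ)+1) := by
  intro n hn
  set N := max (max (B (4*k+3)) (C (4*k+3))) (D (4*k+3) + 1) with hN
  have hNB : B (4*k+3) ≤ N := (le_max_left _ _).trans (le_max_left _ _)
  have hNC : C (4*k+3) ≤ N := (le_max_right _ _).trans (le_max_left _ _)
  have hND : D (4*k+3) + 1 ≤ N := le_max_right _ _
  have hε0 : 0 ≤ 1 / (((4*k+3 : ℕ) : ℝ) + 1) := by positivity
  have hM' : (0:ℝ) < M := by exact_mod_cast hM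
  have key := le_prod_add_sum s α lam b c d M _ N hM'.le hε0 (hs_bd N) hα hlam hd
    (fun n h => hB (4*k+3) n (hNB.trans h)) (fun n h => hC (4*k+3) n (hNC.trans h)) hrec n
    (by omega)
  have hsum : ∑ i ∈ Finset.Ico N n, d i ≤ 1 / (((4*k+3 : ℕ) : ℝ) + 1) :=
    (Finset.sum_le_sum_of_subset_of_nonneg
      (Finset.Ico_subset_Ico hND (by omega)) fun i _ _ => hd i).trans (hD (4*k+3) n)
  have hprod : ∏ i ∈ Finset.Ico N n, (1 - α i) ≤ 1 / (4 * M * ((k:ℝ) + 1)) := by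
    -- The truncated subtraction is harmless: `4 * M * (k + 1)` is positive.
    have hcast : ((4*M*(k+1) - 1 : ℕ) : ℝ) + 1 = 4 * M * ((k:ℝ) + 1) := by
      have h : 4*M*(k+1) - 1 + 1 = 4*M*(k+1) := Nat.sub_add_cancel (Nat.succ_le_of_lt (by positivity))
      exact_mod_cast h
    rw [← hcast]
    refine le_trans ?_ (hA' (4*M*(k+1) - 1) N)
    refine Finset.prod_le_prod_of_subset_of_le_one ?_ ?_ ?_
    · intro i hi
      rw [Finset.mem_Icc] at hi
      rw [Finset.mem_Ico]
      omega
    · exact fun i _ => sub_nonneg.2 (hα i).2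
    · exact fun i _ _ => sub_le_self _ (hα i).1
  have hKP := mul_le_mul_of_nonneg_left hprod hM'.le
  have hMε : (M:ℝ) * (1 / (4 * M * ((k:ℝ) + 1))) = 1 / (((4*k+3 : ℕ) : ℝ) + 1) := by
    push_cast
    field_simp
    ring
  have hfour : 4 * (1 / (((4*k+3 : ℕ) : ℝ) + 1)) = 1 / ((k:ℝ) + 1) := by
    push_cast
    field_simp
    ring
  rw [abs_of_nonneg (hs_nonneg n)]
  linarith
end

section
/- Let (s_n) be a sequence of real numbers and M ∈ ℕ a positive upper bound on (s_n) (s_n ≤ M for all n). Let (α_n), (λ_n) ⊂ [0,1] and (v_n), (b_n), (c_n) ⊂ ℝ, and let A' : ℕ × ℕ → ℕ satisfy condition (Q') for (α_n). Let k, n, p ∈ ℕ be such that for all m ∈ [n, p]: v_m ≤ 1/(4(k+1)(p+1)), b_m ≤ 1/(4(k+1)) and c_m ≤ 1/(4(k+1)); and suppose s_{m+1} ≤ (1−α_m)(1−λ_m)(s_m + v_m) + α_m b_m + λ_m c_m for all m ∈ ℕ. Then s_m ≤ 1/(k+1) for all m ∈ [σ₂(k,n), p], where σ₂(k,n) :=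 A'(n, 4M(k+1)−1) + 1. -/
/-!
Put `ε = 1/(4(k+1))`, `δ = ε/(p+1)`. Since `α + λ ≤ 2(1 - (1-α)(1-λ))` for `α, λ ∈ [0,1]`, one
step of the recursion is at most a convex combination of `s m + δ` and `2ε`. Iterating from
`s n ≤ M` gives `s m ≤ (∏ i ∈ [n, m), (1 - α i)) * M + 2ε + (m - n) δ` as long as `m ≤ p`.
For `m > A' n (4M(k+1)-1)` the product is at most `1/(4M(k+1))`, so the three terms are bounded by
`ε`, `2ε` and `ε`, which add up to `1/(k+1)`.
-/

/-- One step of the recursion; `P` is the product of the factors `1 - α i` accumulated so far and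
`t` the accumulated contribution of the `v i`. -/
lemma step_bound {a l s v b c P M ε δ t : ℝ} (ha : a ∈ Set.Icc (0:ℝ) 1)
    (hl : l ∈ Set.Icc (0:ℝ) 1) (hP : 0 ≤ P) (hM : 0 ≤ M) (hε : 0 ≤ ε) (hδ : 0 ≤ δ) (ht : 0 ≤ t)
    (hs : s ≤ P * M + 2 * ε + t) (hv : v ≤ δ) (hb : b ≤ ε) (hc : c ≤ ε) :
    (1 - a) * (1 - l) * (s + v) + a * b + l * c ≤ P * (1 - a) * M + 2 * ε + (t + δ) := by
  obtain ⟨ha0, ha1⟩ := ha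
  obtain ⟨hl0, hl1⟩ := hl
  have hx0 : 0 ≤ (1 - a) * (1 - l) := mul_nonneg (by linarith) (by linarith)
  have hxa : (1 - a) * (1 - l) ≤ 1 - a := mul_le_of_le_one_right (by linarith) (by linarith)
  have h1 : (1 - a) * (1 - l) * (s + v) ≤ (1 - a) * (1 - l) * (P * M + 2 * ε + (t + δ)) :=
    mul_le_mul_of_nonneg_left (by linarith) hx0
  have h2 : a * b ≤ a * ε := mul_le_mul_of_nonneg_left hb ha0
  have h3 : l * c ≤ l * ε := mul_le_mul_of_nonneg_left hc hl0
  have h4 : (1 - a) * (1 - l) * (P * M) ≤ (1 - a) * (P * M) :=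
    mul_le_mul_of_nonneg_right hxa (mul_nonneg hP hM)
  have h5 : (1 - a) * (1 - l) * (t + δ) ≤ t + δ :=
    mul_le_of_le_one_left (by linarith) (by linarith)
  -- `α + λ ≤ 2(1 - (1-α)(1-λ))`, because the difference is `α(1-λ) + λ(1-α)`.
  have h6 : (a + l) * ε ≤ 2 * (1 - (1 - a) * (1 - l)) * ε :=
    mul_le_mul_of_nonneg_right
      (by nlinarith [mul_nonneg ha0 (sub_nonneg.2 hl1), mul_nonneg hl0 (sub_nonneg.2 ha1)]) hε
  linarith

theorem stmt5 (s α lam v b c : ℕ → ℝ) (M : ℕ) (hM : 0 < M)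
    (hs_bd : ∀ n, s n ≤ (M : ℝ))
    (hα : ∀ n, α n ∈ Set.Icc (0:ℝ) 1) (hlam : ∀ n, lam n ∈ Set.Icc (0:ℝ) 1)
    (A' : ℕ → ℕ → ℕ)
    (hA'mono : ∀ m m' k k' : ℕ, m ≤ m' → k ≤ k' → A' m k ≤ A' m' k')
    (hA' : ∀ k m : ℕ, ∏ i ∈ Finset.Icc m (A' m k), (1 - α i) ≤ 1/((k:ℝ)+1))
    (k n p : ℕ)
    (hsmall : ∀ m ∈ Set.Icc n p,
      v m ≤ 1/(4*((k:ℝ)+1)*((p:ℝ)+1)) ∧ b m ≤ 1/(4*((k:ℝ)+1)) ∧ c m ≤ 1/(4*((k:ℝ)+1)))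
    (hrec : ∀ m, s (m+1) ≤ (1 - α m)*(1 - lam m)*(s m + v m) + α m * b m + lam m * c m) :
    ∀ m ∈ Set.Icc (A' n (4*M*(k+1) - 1) + 1) p, s m ≤ 1/((k:ℝ)+1) := by
  intro m hm
  obtain ⟨hm1, hmp⟩ := hm
  have hk : (0:ℝ) < (k:ℝ) + 1 := by positivity
  have hp : (0:ℝ) < (p:ℝ) + 1 := by positivity
  have hM' : (0:ℝ) < M := by exact_mod_cast hM
  have hf0 : ∀ i, 0 ≤ 1 - α i := fun i => sub_nonneg.2 (hα i).2
  have hf1 : ∀ i, 1 - α i ≤ 1 := fun i => sub_le_self _ (hα i).1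
  have hpos : 4 ≤ 4 * M * (k + 1) := by nlinarith [Nat.mul_pos hM (Nat.succ_pos k)]
  have hQ := hA' (4 * M * (k + 1) - 1) n
  have hcast : ((4 * M * (k + 1) - 1 : ℕ) : ℝ) + 1 = 4 * M * ((k:ℝ) + 1) := by
    rw [Nat.cast_sub (by omega)]
    push_cast
    ring
  rw [hcast] at hQ
  have hpos' : (4:ℝ) ≤ 4 * M * ((k:ℝ) + 1) := by exact_mod_cast hpos
  -- Otherwise the product in (Q') would be empty, hence `1`, exceeding `1/(4M(k+1))`.
  have hnA : n ≤ A' n (4 * M * (k + 1) - 1) := by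
    by_contra! h
    rw [Finset.Icc_eq_empty (by omega), Finset.prod_empty, le_div_iff₀ (by linarith)] at hQ
    linarith
  have key : ∀ j, n ≤ j → j ≤ p → s j ≤ (∏ i ∈ Finset.Ico n j, (1 - α i)) * M
      + 2 * (1/(4*((k:ℝ)+1))) + ((j:ℝ) - n) * (1/(4*((k:ℝ)+1)*((p:ℝ)+1))) := by
    intro j hj
    induction j, hj using Nat.le_induction with
    | base =>
      intro _
      have h0 : (0:ℝ) ≤ 1/(4*((k:ℝ)+1)) := by positivity
      simp only [Finset.Ico_self, Finset.prod_empty, sub_self, zero_mul]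
      linarith [hs_bd n]
    | succ j hj ih =>
      intro hjp
      obtain ⟨hv, hb, hc⟩ := hsmall j ⟨hj, by omega⟩
      have hjn : (0:ℝ) ≤ (j:ℝ) - n := sub_nonneg.2 (by exact_mod_cast hj)
      have h := step_bound (hα j) (hlam j) (Finset.prod_nonneg fun i _ => hf0 i) hM'.le
        (by positivity) (by positivity) (mul_nonneg hjn (by positivity)) (ih (by omega)) hv hb hc
      rw [Finset.prod_Ico_succ_top hj]
      push_cast
      linarith [hrec j]
  have hprod : ∏ i ∈ Finset.Ico n m, (1 - α i) ≤ 1 / (4 * M * ((k:ℝ) + 1)) := by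
    refine le_trans (Finset.prod_le_prod_of_subset_of_le_one ?_ (fun i _ => hf0 i)
      (fun i _ _ => hf1 i)) hQ
    intro i hi
    simp only [Finset.mem_Icc, Finset.mem_Ico] at hi ⊢
    omega
  have h1 : (∏ i ∈ Finset.Ico n m, (1 - α i)) * M ≤ 1/(4*((k:ℝ)+1)) := by
    calc _ ≤ 1 / (4 * M * ((k:ℝ) + 1)) * M := mul_le_mul_of_nonneg_right hprod hM'.le
      _ = _ := by field_simp
  have h2 : ((m:ℝ) - n) * (1/(4*((k:ℝ)+1)*((p:ℝ)+1))) ≤ 1/(4*((k:ℝ)+1)) := by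
    have hmn : (m:ℝ) - n ≤ (p:ℝ) + 1 := by
      have : (m:ℝ) ≤ p := by exact_mod_cast hmp
      linarith [Nat.cast_nonneg (α := ℝ) n]
    calc _ ≤ ((p:ℝ) + 1) * (1/(4*((k:ℝ)+1)*((p:ℝ)+1))) :=
          mul_le_mul_of_nonneg_right hmn (by positivity)
      _ = _ := by field_simp
  have h3 : 1/((k:ℝ)+1) = 4 * (1/(4*((k:ℝ)+1))) := by field_simp
  linarith [key m (by omega) hmp]
end

section
/- Let H be a real Hilbert space, A : H → Set H a monotone operator, and λ > 0 a real number. Let a, b, x, j ∈ H be such that b ∈ A(a) and (1/λ)·(x − j) ∈ A(j) (i.e. j = J^A_λ(x) is a resolvent value of x). Let k ∈ ℕ and let M ∈ ℕ, M ≥ 1, be such that M ≥ max{‖j − a‖, λ·‖b‖}. If ‖j − x‖ ≤ λ/(2M(k+1)), then ⟨a − x, b⟩ ≥ −1/(k+1). -/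
/-!
Write `⟪a - x, b⟫ = ⟪a - j, b⟫ + ⟪j - x, b⟫`. Monotonicity bounds the first summand below by
`⟪a - j, (1/lam) • (x - j)⟫`. By Cauchy–Schwarz both terms are then at least
`-M * ‖j - x‖ / lam`, and the hypothesis on `‖j - x‖` makes this at least `-1 / (2 * (k + 1))`.
-/

open scoped RealInnerProductSpace

/-- A set-valued operator on a real Hilbert space is monotone. -/
def MonotoneOp {H : Type*} [NormedAddCommGroup H] [InnerProductSpace ℝ H]
    (A : H → Set H) : Prop :=
  ∀ x x' y y' : H, y ∈ A x → y' ∈ A x' → 0 ≤ ⟪x - x', y - y'⟫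

theorem stmt7 {H : Type*} [NormedAddCommGroup H] [InnerProductSpace ℝ H]
    (A : H → Set H) (hA : MonotoneOp A) (lam : ℝ) (hlam : 0 < lam)
    (a b x j : H) (hb : b ∈ A a) (hj : (1/lam) • (x - j) ∈ A j)
    (k M : ℕ) (hM1 : 1 ≤ M) (hM : (M : ℝ) ≥ max ‖j - a‖ (lam * ‖b‖))
    (hclose : ‖j - x‖ ≤ lam / (2*(M:ℝ)*((k:ℝ)+1))) :
    ⟪a - x, b⟫ ≥ -(1/((k:ℝ)+1)) := by
  have hMpos : (0 : ℝ) < M := by exact_mod_cast hM1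
  have hk : (0 : ℝ) < (k : ℝ) + 1 := by positivity
  have hja : ‖j - a‖ ≤ M := (le_max_left _ _).trans hM
  have hlb : lam * ‖b‖ ≤ M := (le_max_right _ _).trans hM
  have hhalf : M * (‖j - x‖ / lam) ≤ 1 / (2 * ((k : ℝ) + 1)) := by
    calc M * (‖j - x‖ / lam) ≤ M * (lam / (2 * (M : ℝ) * ((k : ℝ) + 1)) / lam) := by gcongr
      _ = 1 / (2 * ((k : ℝ) + 1)) := by field_simp
  have hmono : ⟪a - j, (1 / lam) • (x - j)⟫ ≤ ⟪a - j, b⟫ := by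
    have h := hA a j b _ hb hj
    rw [inner_sub_right] at h
    linarith
  have hfirst : -(M * (‖j - x‖ / lam)) ≤ ⟪a - j, (1 / lam) • (x - j)⟫ := by
    have h := neg_le_of_abs_le (abs_real_inner_le_norm (a - j) ((1 / lam) • (x - j)))
    rw [norm_smul, Real.norm_of_nonneg (by positivity), norm_sub_rev a j, norm_sub_rev x j,
      one_div_mul_eq_div] at h
    have : ‖j - a‖ * (‖j - x‖ / lam) ≤ M * (‖j - x‖ / lam) := by gcongr
    linarith
  have hsecond : -(M * (‖j - x‖ / lam)) ≤ ⟪j - x, b⟫ := by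
    have h := neg_le_of_abs_le (abs_real_inner_le_norm (j - x) b)
    have : ‖j - x‖ * ‖b‖ ≤ M * (‖j - x‖ / lam) := by
      calc ‖j - x‖ * ‖b‖ = lam * ‖b‖ * (‖j - x‖ / lam) := by field_simp
        _ ≤ M * (‖j - x‖ / lam) := by gcongr
    linarith
  have hsplit : ⟪a - x, b⟫ = ⟪a - j, b⟫ + ⟪j - x, b⟫ := by
    rw [← inner_add_left, sub_add_sub_cancel]
  have hsum : 1 / ((k : ℝ) + 1) = 1 / (2 * ((k : ℝ) + 1)) + 1 / (2 * ((k : ℝ) + 1)) := by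
    field_simp
    norm_num
  linarith
end

section
/- Let H be a real Hilbert space, A, B : H → Set H monotone operators, and let (y_n) be generated by the exact method of alternating resolvents (MAR*) with data u, x₀ ∈ H, (α_n), (λ_n) ⊂ (0,1) and (β_n), (μ_n) ⊂ (0,∞). Let q ∈ H be a common zero of A and B (0 ∈ A(q) and 0 ∈ B(q)) and let N ∈ ℕ satisfy N ≥ max{‖u − q‖, ‖x₀ − q‖, ‖q‖}. Then ‖y_n − q‖ ≤ N for all n ∈ ℕ; in particular ‖y_n‖ ≤ 2N for all n ∈ ℕ. -/
/-! Each step of the method applies a resolvent to a point of the segment between `u` and the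
previous iterate. A resolvent fixes every zero `q` of its operator and is nonexpansive, so it does
not move points away from `q` (`norm_resolvent_sub_le`). The closed ball of radius `N` about `q` is
convex and contains `u` and `x₀`, hence it is invariant under every step
(`norm_step_sub_le`) and contains the whole sequence. -/

open scoped RealInnerProductSpace

/-- `(y n)` is generated by the exact method of alternating resolvents (MAR*). -/
def MAR {H : Type*} [NormedAddCommGroup H] [InnerProductSpace ℝ H]
    (A B : H → Set H) (u x₀ : H) (α lam β μ : ℕ → ℝ) (y : ℕ → H) : Prop :=
  y 0 = x₀ ∧ ∀ n : ℕ,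
    (1 / β n) • (α n • u + (1 - α n) • y (2*n) - y (2*n+1)) ∈ A (y (2*n+1)) ∧
    (1 / μ n) • (lam n • u + (1 - lam n) • y (2*n+1) - y (2*n+2)) ∈ B (y (2*n+2))

/-- If `z` is the resolvent of `w` with parameter `b` and `q` is a zero of `A`, then `z` is no
farther from `q` than `w`: monotonicity gives `‖z - q‖ ^ 2 ≤ ⟪z - q, w - q⟫`, and Cauchy-Schwarz
finishes. -/
lemma norm_resolvent_sub_le {H : Type*} [NormedAddCommGroup H] [InnerProductSpace ℝ H]
    {A : H → Set H} (hA : MonotoneOp A) {q w z : H} {b : ℝ} (hb : 0 < b)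
    (hq : (0 : H) ∈ A q) (hz : (1 / b) • (w - z) ∈ A z) : ‖z - q‖ ≤ ‖w - q‖ := by
  have h := hA z q _ _ hz hq
  rw [sub_zero, inner_smul_right] at h
  have h1 : 0 ≤ ⟪z - q, w - z⟫ := nonneg_of_mul_nonneg_right h (by positivity)
  have h2 : w - z = (w - q) - (z - q) := by abel
  rw [h2, inner_sub_right, real_inner_self_eq_norm_sq] at h1
  have h3 := real_inner_le_norm (z - q) (w - q)
  by_contra! hlt
  nlinarith [norm_nonneg (w - q)]

/-- One step of the method keeps the closed ball of radius `R` about `q` invariant. -/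
lemma norm_step_sub_le {H : Type*} [NormedAddCommGroup H] [InnerProductSpace ℝ H]
    {A : H → Set H} (hA : MonotoneOp A) {q u x z : H} {a b R : ℝ} (ha : a ∈ Set.Ioo (0 : ℝ) 1)
    (hb : 0 < b) (hq : (0 : H) ∈ A q) (hu : ‖u - q‖ ≤ R) (hx : ‖x - q‖ ≤ R)
    (hz : (1 / b) • (a • u + (1 - a) • x - z) ∈ A z) : ‖z - q‖ ≤ R := by
  refine (norm_resolvent_sub_le hA hb hq hz).trans ?_
  have h := convex_closedBall q R (mem_closedBall_iff_norm.2 hu) (mem_closedBall_iff_norm.2 hx)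
    ha.1.le (sub_nonneg.2 ha.2.le) (add_sub_cancel a 1)
  exact mem_closedBall_iff_norm.1 h

theorem stmt8 {H : Type*} [NormedAddCommGroup H] [InnerProductSpace ℝ H]
    (A B : H → Set H) (hA : MonotoneOp A) (hB : MonotoneOp B)
    (u x₀ : H) (α lam β μ : ℕ → ℝ)
    (hα : ∀ n, α n ∈ Set.Ioo (0:ℝ) 1) (hlam : ∀ n, lam n ∈ Set.Ioo (0:ℝ) 1)
    (hβ : ∀ n, 0 < β n) (hμ : ∀ n, 0 < μ n)
    (y : ℕ → H) (hy : MAR A B u x₀ α lam β μ y)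
    (q : H) (hqA : (0:H) ∈ A q) (hqB : (0:H) ∈ B q)
    (N : ℕ) (hN : (N:ℝ) ≥ max (max ‖u - q‖ ‖x₀ - q‖) ‖q‖) :
    ∀ n : ℕ, ‖y n - q‖ ≤ (N:ℝ) ∧ ‖y n‖ ≤ 2*(N:ℝ) := by
  obtain ⟨h0, hstep⟩ := hy
  have hu : ‖u - q‖ ≤ N := ((le_max_left _ _).trans (le_max_left _ _)).trans hN
  have hx : ‖x₀ - q‖ ≤ N := ((le_max_right _ _).trans (le_max_left _ _)).trans hN
  have hq : ‖q‖ ≤ N := (le_max_right _ _).trans hN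
  have hodd : ∀ n, ‖y (2 * n) - q‖ ≤ N → ‖y (2 * n + 1) - q‖ ≤ N := fun n h =>
    norm_step_sub_le hA (hα n) (hβ n) hqA hu h (hstep n).1
  have heven : ∀ n, ‖y (2 * n) - q‖ ≤ N := by
    intro n
    induction n with
    | zero => simpa [h0] using hx
    | succ k ih => exact norm_step_sub_le hB (hlam k) (hμ k) hqB hu (hodd k ih) (hstep k).2
  have hall : ∀ n, ‖y n - q‖ ≤ N := by
    intro n
    obtain ⟨k, rfl | rfl⟩ := Nat.even_or_odd' n
    · exact heven k
    · exact hodd k (heven k)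
  intro n
  refine ⟨hall n, ?_⟩
  have h := norm_add_le (y n - q) q
  rw [sub_add_cancel] at h
  linarith [hall n]
end

section
/- Let H be a real Hilbert space, A, B : H → Set H monotone operators, R ∈ ℕ with R ≥ 1, and jA, jB : H → H resolvents of A, B with parameter 1/R. Let q ∈ H satisfy 0 ∈ A(q) and 0 ∈ B(q), let u ∈ H, and let N ∈ ℕ, N ≥ 1, satisfy N ≥ 2‖u − q‖. Then for every k ∈ ℕ and every monotone f : ℕ → ℕ there exist n ≤ ζ(k,f) and x ∈ H with ‖x − q‖ ≤ N such that ‖jA(x) − x‖ ≤ 1/(f(n)+1) and ‖jB(x) − x‖ ≤ 1/(f(n)+1), and such that for every y ∈ H with ‖y − q‖ ≤ N, if ‖jA(y) − y‖ ≤ 1/(n+1) and ‖jB(y) − y‖ ≤ 1/(n+1) then ⟨u − x, y − x⟩ ≤ 1/(k+1). Here ζ(k,f) := 24N·(w_{f,N}^{(E)}(0)+1)², where w_{f,N}(m) := max{f(24N(m+1)²), 24N(m+1)²}, E := 4N⁴(k+1)², and w^{(E)} denotes the E-fold iterate. -/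
/-!
Resolvents of monotone operators are nonexpansive and fix the zeros of the operator. Write `S m`
for the set of `1/(m+1)`-approximate common fixed points of `jA` and `jB` in the ball of radius `N`
around `q`, and let `mᵢ` be the `i`-th iterate of `w` at `0`.

Among the stages `i < E` there is one with a point `x ∈ S (w mᵢ)` such that
`‖u - x‖² ≤ ‖u - y‖² + ε` for all `y ∈ S mᵢ`, where `ε = 1/(8N²(k+1)²)`: otherwise, starting from
`q ∈ S m_E`, one descends through all `E` stages, losing `ε` from `‖u - ·‖²` at each, although
`‖u - q‖² ≤ N²/4 < E ε` (`exists_almost_minimizer`).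

For this `x`, put `n = 24N(mᵢ+1)²`. By `almost_fixed_convex` (approximate fixed points of a
nonexpansive map are approximately convex), the segment from `x` to any `y ∈ S n` lies in `S mᵢ`.
Comparing `x` with the point of the segment at parameter `t = 1/(4N²(k+1))` yields the variational
inequality.
-/

open scoped RealInnerProductSpace

/-- `j` is the resolvent of `A` with parameter `1/R`. -/
def IsResolvent {H : Type*} [NormedAddCommGroup H] [InnerProductSpace ℝ H]
    (A : H → Set H) (R : ℕ) (j : H → H) : Prop :=
  ∀ x : H, (R : ℝ) • (x - j x) ∈ A (j x)

/-- The bound `ζ(k,f) = 24N (w_{f,N}^{(E)}(0)+1)²` of Lemma on weak projections. -/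
def zetaBound (N k : ℕ) (f : ℕ → ℕ) : ℕ :=
  24 * N *
    (((fun m => max (f (24*N*(m+1)^2)) (24*N*(m+1)^2))^[4*N^4*(k+1)^2] 0) + 1)^2

section
variable {H : Type*} [NormedAddCommGroup H] [InnerProductSpace ℝ H]

lemma resolvent_nonexpansive {A : H → Set H} (hA : MonotoneOp A) {R : ℕ} (hR : 1 ≤ R)
    {j : H → H} (hj : IsResolvent A R j) (x y : H) : ‖j x - j y‖ ≤ ‖x - y‖ := by
  have h := hA _ _ _ _ (hj x) (hj y)
  have hR' : (0:ℝ) < R := by exact_mod_cast hR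
  rw [← smul_sub, inner_smul_right] at h
  have h1 : 0 ≤ ⟪j x - j y, (x - j x) - (y - j y)⟫ := nonneg_of_mul_nonneg_right h hR'
  have e : (x - j x) - (y - j y) = (x - y) - (j x - j y) := by abel
  rw [e, inner_sub_right, real_inner_self_eq_norm_sq] at h1
  have h2 := real_inner_le_norm (j x - j y) (x - y)
  by_contra! hc
  nlinarith [norm_nonneg (x - y)]

lemma resolvent_zero {A : H → Set H} (hA : MonotoneOp A) {R : ℕ} (hR : 1 ≤ R)
    {j : H → H} (hj : IsResolvent A R j) {q : H} (hq : (0:H) ∈ A q) : j q = q := by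
  have h := hA _ _ _ _ (hj q) hq
  have hR' : (0:ℝ) < R := by exact_mod_cast hR
  rw [sub_zero, inner_smul_right] at h
  have h1 : 0 ≤ ⟪j q - q, q - j q⟫ := nonneg_of_mul_nonneg_right h hR'
  rw [← neg_sub (j q) q, inner_neg_right, real_inner_self_eq_norm_sq] at h1
  have h2 : ‖j q - q‖ = 0 := by nlinarith [norm_nonneg (j q - q)]
  exact sub_eq_zero.mp (norm_eq_zero.mp h2)

lemma norm_sq_convex_identity (p x y : H) (t : ℝ) :
    ‖p - (x + t • (y - x))‖ ^ 2
      = (1 - t) * ‖p - x‖ ^ 2 + t * ‖p - y‖ ^ 2 - t * (1 - t) * ‖y - x‖ ^ 2 := by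
  have e1 : p - (x + t • (y - x)) = (p - x) - t • (y - x) := by abel
  have e2 : p - y = (p - x) - (y - x) := by abel
  rw [e1, e2, norm_sub_sq_real, norm_sub_sq_real (p - x) (y - x), inner_smul_right, norm_smul,
    mul_pow, Real.norm_eq_abs, sq_abs]
  ring

/-- Points of the segment between two `δ`-approximate fixed points of a nonexpansive map are
approximate fixed points, with an error of order `√δ`. -/
lemma almost_fixed_convex {j : H → H} (hj : ∀ x y, ‖j x - j y‖ ≤ ‖x - y‖) {x y : H} {δ t : ℝ}
    (hδ : 0 ≤ δ) (hx : ‖j x - x‖ ≤ δ) (hy : ‖j y - y‖ ≤ δ) (ht0 : 0 ≤ t) (ht1 : t ≤ 1) :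
    ‖j (x + t • (y - x)) - (x + t • (y - x))‖ ^ 2 ≤ ‖y - x‖ * δ + δ ^ 2 := by
  set z := x + t • (y - x) with hz
  have ex : ‖z - x‖ = t * ‖y - x‖ := by
    rw [hz, add_sub_cancel_left, norm_smul, Real.norm_of_nonneg ht0]
  have ey : ‖z - y‖ = (1 - t) * ‖y - x‖ := by
    have : z - y = (1 - t) • (x - y) := by rw [hz]; module
    rw [this, norm_smul, Real.norm_of_nonneg (by linarith), norm_sub_rev x y]
  have bx : ‖j z - x‖ ≤ t * ‖y - x‖ + δ := by
    have := norm_sub_le_norm_sub_add_norm_sub (j z) (j x) x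
    linarith [hj z x]
  have b_y : ‖j z - y‖ ≤ (1 - t) * ‖y - x‖ + δ := by
    have := norm_sub_le_norm_sub_add_norm_sub (j z) (j y) y
    linarith [hj z y]
  have sx := pow_le_pow_left₀ (norm_nonneg _) bx 2
  have sy := pow_le_pow_left₀ (norm_nonneg _) b_y 2
  rw [hz, norm_sq_convex_identity, ← hz]
  have h1 := mul_le_mul_of_nonneg_left sx (by linarith : 0 ≤ 1 - t)
  have h2 := mul_le_mul_of_nonneg_left sy ht0
  have h3 : 0 ≤ ‖y - x‖ * δ * (1 - 2 * t) ^ 2 := by positivity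
  nlinarith

/-- Finite descent: if `φ q < E ε` for some `q` in the last stage `S E` and `φ ≥ 0`, then at some
stage `i < E` an element of `S (i+1)` minimizes `φ` over `S i` up to `ε`. -/
lemma exists_almost_minimizer {α : Type*} (S : ℕ → Set α) (φ : α → ℝ) (hφ : ∀ a, 0 ≤ φ a)
    {E : ℕ} {ε : ℝ} {q : α} (hq : q ∈ S E) (hE : φ q < E * ε) :
    ∃ i < E, ∃ x ∈ S (i + 1), ∀ y ∈ S i, φ x ≤ φ y + ε := by
  by_contra! hc
  have key : ∀ i ≤ E, ∃ x ∈ S (E - i), φ x + i * ε ≤ φ q := by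
    intro i
    induction i with
    | zero => exact fun _ => ⟨q, by simpa using hq, by simp⟩
    | succ i ih =>
      intro hi
      obtain ⟨x, hx, hxq⟩ := ih (by omega)
      obtain ⟨y, hy, hyx⟩ := hc (E - (i + 1)) (by omega) x
        (by rwa [show E - (i + 1) + 1 = E - i by omega])
      exact ⟨y, hy, by push_cast; linarith⟩
  obtain ⟨x, -, hx⟩ := key E le_rfl
  linarith [hφ x]

lemma almost_fixed_of_segment {j : H → H} (hj : ∀ x y, ‖j x - j y‖ ≤ ‖x - y‖) {N m : ℕ}
    (hN1 : 1 ≤ N) {x y : H} (hD : ‖y - x‖ ≤ 2 * N)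
    (hx : ‖j x - x‖ ≤ 1 / (((24 * N * (m + 1) ^ 2 : ℕ) : ℝ) + 1))
    (hy : ‖j y - y‖ ≤ 1 / (((24 * N * (m + 1) ^ 2 : ℕ) : ℝ) + 1))
    {t : ℝ} (ht0 : 0 ≤ t) (ht1 : t ≤ 1) :
    ‖j (x + t • (y - x)) - (x + t • (y - x))‖ ≤ 1 / ((m : ℝ) + 1) := by
  have hN : (1:ℝ) ≤ N := by exact_mod_cast hN1
  set δ : ℝ := 1 / (((24 * N * (m + 1) ^ 2 : ℕ) : ℝ) + 1) with hδ
  have hδ0 : 0 ≤ δ := by positivity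
  have hδ1 : δ ≤ 1 := by
    rw [hδ, div_le_one (by positivity)]
    linarith [Nat.cast_nonneg (α := ℝ) (24 * N * (m + 1) ^ 2)]
  have h := almost_fixed_convex hj hδ0 hx hy ht0 ht1
  have h3 : 3 * N * δ ≤ (1 / ((m : ℝ) + 1)) ^ 2 := by
    rw [hδ, div_pow, mul_one_div, div_le_div_iff₀ (by positivity) (by positivity)]
    push_cast
    nlinarith [mul_nonneg (Nat.cast_nonneg (α := ℝ) N) (sq_nonneg ((m:ℝ) + 1))]
  refine abs_le_of_sq_le_sq' (h.trans ?_) (by positivity) |>.2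
  nlinarith [mul_le_mul_of_nonneg_right hD hδ0]

/-- If `x` minimizes the distance to `u` up to `ε = 1/(8N²(k+1)²)` along the segment from `x` to
`y`, the variational inequality holds at `y` up to `1/(k+1)`. -/
lemma inner_le_of_almost_min {u x y : H} {N k : ℕ} (hN1 : 1 ≤ N) (hD : ‖y - x‖ ≤ 2 * N)
    (hmin : ∀ t : ℝ, 0 ≤ t → t ≤ 1 →
      ‖u - x‖ ^ 2 ≤ ‖u - (x + t • (y - x))‖ ^ 2 + 1 / (8 * (N:ℝ) ^ 2 * ((k:ℝ) + 1) ^ 2)) :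
    ⟪u - x, y - x⟫ ≤ 1 / ((k : ℝ) + 1) := by
  have hN : (1:ℝ) ≤ N := by exact_mod_cast hN1
  have hk : (1:ℝ) ≤ (k:ℝ) + 1 := by linarith [Nat.cast_nonneg (α := ℝ) k]
  set K : ℝ := (k:ℝ) + 1
  -- This `t` makes `t‖y - x‖²/2 ≤ 1/(2K)` and `ε/(2t) = 1/(4K)`.
  set t : ℝ := 1 / (4 * (N:ℝ) ^ 2 * K) with ht
  have hc : 1 ≤ 4 * (N:ℝ) ^ 2 * K := by nlinarith [sq_nonneg (N:ℝ)]
  have ht0 : 0 < t := by positivity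
  have h := hmin t ht0.le (by rw [ht, div_le_one (by positivity)]; exact hc)
  have e1 : u - (x + t • (y - x)) = (u - x) - t • (y - x) := by abel
  rw [e1, norm_sub_sq_real (u - x), inner_smul_right, norm_smul, mul_pow,
    Real.norm_of_nonneg ht0.le] at h
  have hD2 : ‖y - x‖ ^ 2 ≤ (2 * (N:ℝ)) ^ 2 := pow_le_pow_left₀ (norm_nonneg _) hD 2
  have h4 := mul_le_mul_of_nonneg_left hD2 (sq_nonneg t)
  have e2 : t ^ 2 * (2 * (N:ℝ)) ^ 2 = t * (1 / K) := by rw [ht]; field_simp; ring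
  have e3 : 1 / (8 * (N:ℝ) ^ 2 * K ^ 2) = t * (1 / K) / 2 := by rw [ht]; field_simp; ring
  have h5 : 0 < 1 / K := by positivity
  have h6 : 0 < t * (1 / K) := by positivity
  refine le_of_mul_le_mul_left ?_ ht0
  linarith

end

theorem stmt9 {H : Type*} [NormedAddCommGroup H] [InnerProductSpace ℝ H]
    (A B : H → Set H) (hA : MonotoneOp A) (hB : MonotoneOp B)
    (R : ℕ) (hR : 1 ≤ R) (jA jB : H → H)
    (hjA : IsResolvent A R jA) (hjB : IsResolvent B R jB)
    (q : H) (hqA : (0:H) ∈ A q) (hqB : (0:H) ∈ B q)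
    (u : H) (N : ℕ) (hN1 : 1 ≤ N) (hN : (N:ℝ) ≥ 2*‖u - q‖)
    (k : ℕ) (f : ℕ → ℕ) (hf : Monotone f) :
    ∃ n ≤ zetaBound N k f, ∃ x : H, ‖x - q‖ ≤ (N:ℝ) ∧
      ‖jA x - x‖ ≤ 1/((f n : ℝ)+1) ∧ ‖jB x - x‖ ≤ 1/((f n : ℝ)+1) ∧
      ∀ y : H, ‖y - q‖ ≤ (N:ℝ) →
        ‖jA y - y‖ ≤ 1/((n:ℝ)+1) → ‖jB y - y‖ ≤ 1/((n:ℝ)+1) →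
        ⟪u - x, y - x⟫ ≤ 1/((k:ℝ)+1) := by
  have nA := resolvent_nonexpansive hA hR hjA
  have nB := resolvent_nonexpansive hB hR hjB
  have fA := resolvent_zero hA hR hjA hqA
  have fB := resolvent_zero hB hR hjB hqB
  have hNr : (1:ℝ) ≤ N := by exact_mod_cast hN1
  unfold zetaBound
  set w : ℕ → ℕ := fun m => max (f (24*N*(m+1)^2)) (24*N*(m+1)^2) with hw
  have hwle : ∀ m, 24*N*(m+1)^2 ≤ w m := fun m => le_max_right _ _
  have hwf : ∀ m, f (24*N*(m+1)^2) ≤ w m := fun m => le_max_left _ _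
  have hwid : ∀ m, m ≤ w m := fun m => le_trans (by nlinarith) (hwle m)
  have hmono : Monotone (fun i => w^[i] 0) := monotone_nat_of_le_succ fun i => by
    rw [Function.iterate_succ_apply']
    exact hwid _
  let S : ℕ → Set H := fun i => {x | ‖x - q‖ ≤ N ∧ ‖jA x - x‖ ≤ 1/((w^[i] 0 : ℕ) + 1 : ℝ) ∧
    ‖jB x - x‖ ≤ 1/((w^[i] 0 : ℕ) + 1 : ℝ)}
  have hqS : q ∈ S (4*N^4*(k+1)^2) := by
    refine ⟨by simp, ?_, ?_⟩
    · rw [fA, sub_self, norm_zero]; positivity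
    · rw [fB, sub_self, norm_zero]; positivity
  have hE : ‖u - q‖ ^ 2
      < ((4*N^4*(k+1)^2 : ℕ) : ℝ) * (1 / (8 * (N:ℝ) ^ 2 * ((k:ℝ) + 1) ^ 2)) := by
    have e : ((4*N^4*(k+1)^2 : ℕ) : ℝ) * (1 / (8 * (N:ℝ) ^ 2 * ((k:ℝ) + 1) ^ 2))
        = (N:ℝ) ^ 2 / 2 := by
      push_cast; field_simp; ring
    rw [e]
    nlinarith [norm_nonneg (u - q)]
  obtain ⟨i, hi, x, ⟨hxq, hxA, hxB⟩, hmin⟩ :=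
    exists_almost_minimizer S (fun x => ‖u - x‖ ^ 2) (fun _ => by positivity) hqS hE
  rw [Function.iterate_succ_apply'] at hxA hxB
  have hanti : ∀ {a b : ℕ}, a ≤ b → 1 / ((b:ℝ) + 1) ≤ 1 / ((a:ℝ) + 1) := fun hab =>
    one_div_le_one_div_of_le (by positivity) (by exact_mod_cast Nat.succ_le_succ hab)
  set m := w^[i] 0 with hm
  refine ⟨24*N*(m+1)^2, ?_, x, hxq, hxA.trans (hanti (hwf m)), hxB.trans (hanti (hwf m)), ?_⟩
  · have : m ≤ w^[4*N^4*(k+1)^2] 0 := hmono hi.le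
    gcongr
  intro y hyq hyA hyB
  have hD : ‖y - x‖ ≤ 2 * N := by
    have := norm_sub_le_norm_sub_add_norm_sub y q x
    rw [norm_sub_rev q x] at this
    linarith
  refine inner_le_of_almost_min hN1 hD fun t ht0 ht1 => hmin _ ⟨?_, ?_, ?_⟩
  · have e : x + t • (y - x) - q = (1 - t) • (x - q) + t • (y - q) := by module
    rw [e]
    refine (norm_add_le _ _).trans ?_
    rw [norm_smul, norm_smul, Real.norm_of_nonneg ht0, Real.norm_of_nonneg (by linarith)]
    nlinarith
  · exact almost_fixed_of_segment nA hN1 hD (hxA.trans (hanti (hwle m))) hyA ht0 ht1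
  · exact almost_fixed_of_segment nB hN1 hD (hxB.trans (hanti (hwle m))) hyB ht0 ht1
end

section
/- Let H be a real Hilbert space and A, B : H → Set H monotone operators. Let (y_n) be generated by the exact method of alternating resolvents (MAR*) with data u, x₀ ∈ H, (α_n), (λ_n) ⊂ (0,1) and (β_n), (μ_n) ⊂ (0,∞). Let (z_n) and auxiliary points (p_n), (q'_n) in H satisfy: z₀ = α₀ u + (1−α₀) y₀, and for all n, (1/β_n)·(z_{2n} − p_n) ∈ A(p_n) with z_{2n+1} = λ_n u + (1−λ_n) p_n, and (1/μ_n)·(z_{2n+1} − q'_n) ∈ B(q'_n) with z_{2n+2} = α_{n+1} u + (1−α_{n+1}) q'_n (i.e. (z_n) is the Halpern-type iteration (HPPA₂*) with α̃_n = λ_n, λ̃_n = α_{n+1}, β̃_n = β_n, μ̃_n = μ_n). Then: (1) if α_n → 0, λ_n → 0 and y_n → x for some x ∈ H, then z_n → x; (2) if a, ℓ : ℕ → ℕ are rates of convergence for α_n → 0 and λ_n → 0 respectively, q ∈ H is a common zero of A and B (0 ∈ A(q), 0 ∈ B(q)) and N ∈ ℕ satisfies N ≥ max{‖u − q‖, ‖y₀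 − q‖, ‖q‖}, then γ(k) := 2·max{a(2N(k+1)−1), ℓ(2N(k+1)−1)} + 2 is a rate of convergence for ‖y_n − z_n‖ → 0; (3) under the hypotheses of (2), if ρ is a rate of metastability for (y_n), then ρ̃(k,f) := max{ρ(2k+1, f̃[γ(4k+3)]), γ(4k+3)} is a rate of metastability for (z_n). -/
/-!
The two iterations are the same process read at different moments. A resolvent value of a monotone
operator is unique (`resolvent_nonexpansive`), so induction gives `p n = y (2n+1)`,
`q' n = y (2n+2)`, hence `z (2n) = α n • u + (1 - α n) • y (2n)` and
`z (2n+1) = lam n • u + (1 - lam n) • y (2n+1)` (`halpern_eq_anchored_mar`).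

Thus `z n - y n = w • (u - y n)` with `w` equal to `α (n/2)` or `lam (n/2)`. If `y` converges this
difference tends to `0`, which is (1). If `q` is a common zero, the ball of radius `N` around `q`
contains every `y n` (`mar_bounded`), so `‖y n - z n‖ ≤ 2N w`, which gives the rate in (2).
For (3), the metastability interval of `y` for the function `m ↦ f (max m γ)` is started at
`max n γ`, and the triangle inequality adds up `1/(4(k+1)) + 1/(2(k+1)) + 1/(4(k+1))`.
-/

open scoped RealInnerProductSpace
open Filter Topology

/-- `γ(k) = 2·max{a(2N(k+1)−1), ℓ(2N(k+1)−1)} + 2`. -/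
def gammaRate (a ℓ : ℕ → ℕ) (N k : ℕ) : ℕ :=
  2 * max (a (2*N*(k+1) - 1)) (ℓ (2*N*(k+1) - 1)) + 2

/-- Resolvents of a monotone operator are nonexpansive. For `x' = v' = q` a zero of the operator
this bounds the distance to `q`; for `v = v'` it is uniqueness of the resolvent value. -/
theorem resolvent_nonexpansive_s13 {H : Type*} [NormedAddCommGroup H] [InnerProductSpace ℝ H]
    {A : H → Set H} (hA : MonotoneOp A) {c : ℝ} (hc : 0 < c) {v v' x x' : H}
    (hx : (1 / c) • (v - x) ∈ A x) (hx' : (1 / c) • (v' - x') ∈ A x') :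
    ‖x - x'‖ ≤ ‖v - v'‖ := by
  have h := hA _ _ _ _ hx hx'
  rw [← smul_sub, inner_smul_right] at h
  have h1 : 0 ≤ ⟪x - x', v - x - (v' - x')⟫ := nonneg_of_mul_nonneg_right h (by positivity)
  rw [show v - x - (v' - x') = (v - v') - (x - x') by abel, inner_sub_right,
    real_inner_self_eq_norm_sq] at h1
  have h2 := real_inner_le_norm (x - x') (v - v')
  by_contra! hlt
  nlinarith [norm_nonneg (v - v'), norm_nonneg (x - x')]

theorem resolvent_unique {H : Type*} [NormedAddCommGroup H] [InnerProductSpace ℝ H]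
    {A : H → Set H} (hA : MonotoneOp A) {c : ℝ} (hc : 0 < c) {v x x' : H}
    (hx : (1 / c) • (v - x) ∈ A x) (hx' : (1 / c) • (v - x') ∈ A x') : x = x' := by
  have h := resolvent_nonexpansive_s13 hA hc hx hx'
  rw [sub_self, norm_zero] at h
  exact sub_eq_zero.1 (norm_le_zero_iff.1 h)

/-- Convex combinations and resolvents both preserve balls around a zero of the operator. -/
theorem resolvent_step_bounded {H : Type*} [NormedAddCommGroup H] [InnerProductSpace ℝ H]
    {A : H → Set H} (hA : MonotoneOp A) {c t R : ℝ} (hc : 0 < c) (ht : t ∈ Set.Ioo (0:ℝ) 1)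
    {u v x q : H} (hq : (0:H) ∈ A q) (hx : (1 / c) • (t • u + (1 - t) • v - x) ∈ A x)
    (hu : ‖u - q‖ ≤ R) (hv : ‖v - q‖ ≤ R) : ‖x - q‖ ≤ R := by
  have hq' : (1 / c) • (q - q) ∈ A q := by simpa using hq
  refine (resolvent_nonexpansive_s13 hA hc hx hq').trans ?_
  obtain ⟨h0, h1⟩ := ht
  rw [show t • u + (1 - t) • v - q = t • (u - q) + (1 - t) • (v - q) by module]
  refine (norm_add_le _ _).trans ?_
  rw [norm_smul, norm_smul, Real.norm_of_nonneg h0.le, Real.norm_of_nonneg (by linarith)]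
  nlinarith

theorem mar_bounded {H : Type*} [NormedAddCommGroup H] [InnerProductSpace ℝ H]
    {A B : H → Set H} (hA : MonotoneOp A) (hB : MonotoneOp B)
    {u x₀ : H} {α lam β μ : ℕ → ℝ}
    (hα : ∀ n, α n ∈ Set.Ioo (0:ℝ) 1) (hlam : ∀ n, lam n ∈ Set.Ioo (0:ℝ) 1)
    (hβ : ∀ n, 0 < β n) (hμ : ∀ n, 0 < μ n)
    {y : ℕ → H} (hy : MAR A B u x₀ α lam β μ y)
    {q : H} (hqA : (0:H) ∈ A q) (hqB : (0:H) ∈ B q) {R : ℝ}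
    (hu : ‖u - q‖ ≤ R) (h0 : ‖y 0 - q‖ ≤ R) (n : ℕ) : ‖y n - q‖ ≤ R := by
  have odd (m : ℕ) (h : ‖y (2*m) - q‖ ≤ R) : ‖y (2*m+1) - q‖ ≤ R :=
    resolvent_step_bounded hA (hβ m) (hα m) hqA (hy.2 m).1 hu h
  have even (m : ℕ) : ‖y (2*m) - q‖ ≤ R := by
    induction m with
    | zero => simpa using h0
    | succ m ih =>
      exact resolvent_step_bounded hB (hμ m) (hlam m) hqB (hy.2 m).2 hu (odd m ih)
  obtain ⟨m, rfl | rfl⟩ := n.even_or_odd'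
  · exact even m
  · exact odd m (even m)

/-- The Halpern-type iterate is the alternating-resolvent iterate moved towards `u`
by the parameter of the next step. -/
theorem halpern_eq_anchored_mar {H : Type*} [NormedAddCommGroup H] [InnerProductSpace ℝ H]
    {A B : H → Set H} (hA : MonotoneOp A) (hB : MonotoneOp B)
    {u x₀ : H} {α lam β μ : ℕ → ℝ}
    (hβ : ∀ n, 0 < β n) (hμ : ∀ n, 0 < μ n)
    {y : ℕ → H} (hy : MAR A B u x₀ α lam β μ y)
    {z p q' : ℕ → H}
    (hz0 : z 0 = α 0 • u + (1 - α 0) • y 0)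
    (hz : ∀ n : ℕ,
      (1 / β n) • (z (2*n) - p n) ∈ A (p n) ∧
      z (2*n+1) = lam n • u + (1 - lam n) • p n ∧
      (1 / μ n) • (z (2*n+1) - q' n) ∈ B (q' n) ∧
      z (2*n+2) = α (n+1) • u + (1 - α (n+1)) • q' n) (n : ℕ) :
    z (2*n) = α n • u + (1 - α n) • y (2*n) ∧
    z (2*n+1) = lam n • u + (1 - lam n) • y (2*n+1) := by
  have odd (m : ℕ) (h : z (2*m) = α m • u + (1 - α m) • y (2*m)) :
      z (2*m+1) = lam m • u + (1 - lam m) • y (2*m+1) := by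
    obtain ⟨h1, h2, -, -⟩ := hz m
    rw [h] at h1
    rw [h2, resolvent_unique hA (hβ m) h1 (hy.2 m).1]
  have even (m : ℕ) : z (2*m) = α m • u + (1 - α m) • y (2*m) := by
    induction m with
    | zero => simpa using hz0
    | succ m ih =>
      obtain ⟨-, -, h3, h4⟩ := hz m
      rw [odd m ih] at h3
      rw [show 2 * (m + 1) = 2 * m + 2 by ring, h4, resolvent_unique hB (hμ m) h3 (hy.2 m).2]
  exact ⟨even n, odd n (even n)⟩

theorem stmt13 {H : Type*} [NormedAddCommGroup H] [InnerProductSpace ℝ H]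
    (A B : H → Set H) (hA : MonotoneOp A) (hB : MonotoneOp B)
    (u x₀ : H) (α lam β μ : ℕ → ℝ)
    (hα : ∀ n, α n ∈ Set.Ioo (0:ℝ) 1) (hlam : ∀ n, lam n ∈ Set.Ioo (0:ℝ) 1)
    (hβ : ∀ n, 0 < β n) (hμ : ∀ n, 0 < μ n)
    (y : ℕ → H) (hy : MAR A B u x₀ α lam β μ y)
    (z p q' : ℕ → H)
    (hz0 : z 0 = α 0 • u + (1 - α 0) • y 0)
    (hz : ∀ n : ℕ,
      (1 / β n) • (z (2*n) - p n) ∈ A (p n) ∧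
      z (2*n+1) = lam n • u + (1 - lam n) • p n ∧
      (1 / μ n) • (z (2*n+1) - q' n) ∈ B (q' n) ∧
      z (2*n+2) = α (n+1) • u + (1 - α (n+1)) • q' n) :
    -- (1)
    (∀ x : H, Tendsto α atTop (𝓝 0) → Tendsto lam atTop (𝓝 0) →
      Tendsto y atTop (𝓝 x) → Tendsto z atTop (𝓝 x)) ∧
    -- (2) and (3)
    (∀ a ℓ : ℕ → ℕ,
      (∀ k : ℕ, ∀ n ≥ a k, |α n| ≤ 1/((k:ℝ)+1)) →
      (∀ k : ℕ, ∀ n ≥ ℓ k, |lam n| ≤ 1/((k:ℝ)+1)) →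
      ∀ q : H, (0:H) ∈ A q → (0:H) ∈ B q →
      ∀ N : ℕ, (N:ℝ) ≥ max (max ‖u - q‖ ‖y 0 - q‖) ‖q‖ →
        ((∀ k : ℕ, ∀ n ≥ gammaRate a ℓ N k, ‖y n - z n‖ ≤ 1/((k:ℝ)+1)) ∧
         (∀ ρ : ℕ → (ℕ → ℕ) → ℕ,
           (∀ (k : ℕ) (f : ℕ → ℕ), ∃ n ≤ ρ k f,
             ∀ i ∈ Set.Icc n (f n), ∀ j ∈ Set.Icc n (f n),
               ‖y i - y j‖ ≤ 1/((k:ℝ)+1)) →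
           ∀ (k : ℕ) (f : ℕ → ℕ),
             ∃ n ≤ max (ρ (2*k+1) (fun m => f (max m (gammaRate a ℓ N (4*k+3)))))
                 (gammaRate a ℓ N (4*k+3)),
               ∀ i ∈ Set.Icc n (f n), ∀ j ∈ Set.Icc n (f n),
                 ‖z i - z j‖ ≤ 1/((k:ℝ)+1)))) := by
  have key (n : ℕ) : ∃ w : ℝ, (w = α (n/2) ∨ w = lam (n/2)) ∧ y n - z n = w • (y n - u) := by
    obtain ⟨m, rfl | rfl⟩ := n.even_or_odd'
    · refine ⟨α m, Or.inl (by congr 1; omega), ?_⟩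
      rw [(halpern_eq_anchored_mar hA hB hβ hμ hy hz0 hz m).1]
      module
    · refine ⟨lam m, Or.inr (by congr 1; omega), ?_⟩
      rw [(halpern_eq_anchored_mar hA hB hβ hμ hy hz0 hz m).2]
      module
  refine ⟨fun x hα0 hlam0 hyx => ?_, fun a ℓ ha hℓ q hqA hqB N hN => ?_⟩
  · have hhalf : Tendsto (fun n : ℕ => n / 2) atTop atTop :=
      Nat.tendsto_div_const_atTop two_ne_zero
    have hlim : Tendsto (fun n => (α (n/2) + lam (n/2)) * ‖y n - u‖) atTop (𝓝 0) := by
      simpa using ((hα0.comp hhalf).add (hlam0.comp hhalf)).mul (hyx.sub_const u).norm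
    have hdiff : Tendsto (fun n => y n - z n) atTop (𝓝 0) := by
      refine squeeze_zero_norm (fun n => ?_) hlim
      obtain ⟨w, hw, h⟩ := key n
      rw [h, norm_smul]
      refine mul_le_mul_of_nonneg_right ?_ (norm_nonneg _)
      have h1 := (hα (n/2)).1
      have h2 := (hlam (n/2)).1
      rcases hw with rfl | rfl
      · rw [Real.norm_of_nonneg h1.le]; linarith
      · rw [Real.norm_of_nonneg h2.le]; linarith
    simpa using hyx.sub hdiff
  · have huq : ‖u - q‖ ≤ N := ((le_max_left _ _).trans (le_max_left _ _)).trans hN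
    have hyq : ‖y 0 - q‖ ≤ N := ((le_max_right _ _).trans (le_max_left _ _)).trans hN
    have hyu (n : ℕ) : ‖y n - u‖ ≤ 2 * N := by
      have h1 := mar_bounded hA hB hα hlam hβ hμ hy hqA hqB huq hyq n
      have h2 := norm_sub_le_norm_sub_add_norm_sub (y n) q u
      rw [norm_sub_rev q u] at h2
      linarith
    have rate (k n : ℕ) (hn : n ≥ gammaRate a ℓ N k) : ‖y n - z n‖ ≤ 1/((k:ℝ)+1) := by
      obtain ⟨w, hw, h⟩ := key n
      rw [h, norm_smul, Real.norm_eq_abs]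
      have hk : (0:ℝ) < (k:ℝ) + 1 := by positivity
      -- For `N = 0` the truncated index `2N(k+1) - 1` is meaningless, but then `y n = u`.
      rcases Nat.eq_zero_or_pos N with rfl | hNpos
      · have h0 : ‖y n - u‖ = 0 := le_antisymm (by simpa using hyu n) (norm_nonneg _)
        rw [h0, mul_zero]
        positivity
      · have hNr : (0:ℝ) < N := by exact_mod_cast hNpos
        have hcast : (((2*N*(k+1) - 1 : ℕ) : ℝ) + 1) = 2*N*((k:ℝ)+1) := by
          have h1 : 2*N*(k+1) - 1 + 1 = 2*N*(k+1) :=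
            Nat.sub_add_cancel (by have := Nat.mul_pos hNpos k.succ_pos; nlinarith)
          exact_mod_cast h1
        have hwle : |w| ≤ 1 / (2*N*((k:ℝ)+1)) := by
          rw [← hcast]
          unfold gammaRate at hn
          rcases hw with rfl | rfl
          · exact ha _ _ (by omega)
          · exact hℓ _ _ (by omega)
        calc |w| * ‖y n - u‖ ≤ 1 / (2*N*((k:ℝ)+1)) * (2 * N) :=
              mul_le_mul hwle (hyu n) (norm_nonneg _) (by positivity)
          _ = 1/((k:ℝ)+1) := by field_simp
    refine ⟨rate, fun ρ hρ k f => ?_⟩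
    set g := gammaRate a ℓ N (4*k+3) with hg
    obtain ⟨n, hn, hmeta⟩ := hρ (2*k+1) (fun m => f (max m g))
    refine ⟨max n g, max_le_max hn le_rfl, fun i hi j hj => ?_⟩
    have hyij := hmeta i ⟨(le_max_left _ _).trans hi.1, hi.2⟩
      j ⟨(le_max_left _ _).trans hj.1, hj.2⟩
    have hzi := rate (4*k+3) i ((le_max_right _ _).trans hi.1)
    have hzj := rate (4*k+3) j ((le_max_right _ _).trans hj.1)
    push_cast at hyij hzi hzj
    have hk : (0:ℝ) < (k:ℝ) + 1 := by positivity
    have e1 : 1 / (2*(k:ℝ)+1+1) = 1/((k:ℝ)+1) / 2 := by field_simp; ring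
    have e2 : 1 / (4*(k:ℝ)+3+1) = 1/((k:ℝ)+1) / 4 := by field_simp; ring
    rw [e1] at hyij
    rw [e2] at hzi hzj
    rw [show z i - z j = (y i - y j) - (y i - z i) + (y j - z j) by abel]
    have t1 := norm_add_le ((y i - y j) - (y i - z i)) (y j - z j)
    have t2 := norm_sub_le (y i - y j) (y i - z i)
    linarith
end

section
/- Let (s_n) be a sequence of real numbers and D ∈ ℕ, D ≥ 1, be such that 0 ≤ s_m ≤ D for all m ∈ ℕ. Let k, n ∈ ℕ and let f : ℕ → ℕ be monotone. If s_{m+1} ≤ s_m for all m ∈ [n, φ₁(k,n,f)], then there exists n' ≤ φ₂(k,n,f) such that s_m − s_{m+1} ≤ 1/(k+1) for all m ∈ [n', f(n')]; moreover such an n' can be found in the set {(f+1)^{(i)}(n) : i ≤ D(k+1)}. Here φ₂(k,n,f) := max{n, (f+1)^{(D(k+1))}(n)} and φ₁(k,n,f) := f(φ₂(k,n,f)) + 1, where (f+1)^{(i)} denotes the i-fold iterate of the function m ↦ f(m)+1. -/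
/-!
If `f n < n`, the interval `[n, f n]` is empty and `n' = n` works. Otherwise the iterates
`a i = (f+1)^[i] n` increase, and if every interval `[a i, f (a i)]` with `i ≤ D(k+1)` contained a
drop `s m - s (m+1) > 1/(k+1)`, then, since `s` is nonincreasing there, it would lose more than
`1/(k+1)` between `a i` and `a (i+1)`. These `D(k+1)+1` losses add up to more than `D`,
contradicting `0 ≤ s ≤ D`.
-/

/-- `φ₂(k,n,f) = max{n, (f+1)^{(D(k+1))}(n)}`. -/
def phi2 (D k n : ℕ) (f : ℕ → ℕ) : ℕ :=
  max n ((fun m => f m + 1)^[D*(k+1)] n)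

/-- `φ₁(k,n,f) = f(φ₂(k,n,f)) + 1`. -/
def phi1 (D k n : ℕ) (f : ℕ → ℕ) : ℕ :=
  f (phi2 D k n f) + 1

theorem stmt15 (s : ℕ → ℝ) (D : ℕ) (hD : 1 ≤ D)
    (hs : ∀ m : ℕ, 0 ≤ s m ∧ s m ≤ (D : ℝ))
    (k n : ℕ) (f : ℕ → ℕ) (hf : Monotone f)
    (hdec : ∀ m ∈ Set.Icc n (phi1 D k n f), s (m+1) ≤ s m) :
    ∃ n' ≤ phi2 D k n f,
      (∃ i ≤ D*(k+1), n' = (fun m => f m + 1)^[i] n) ∧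
      ∀ m ∈ Set.Icc n' (f n'), s m - s (m+1) ≤ 1/((k:ℝ)+1) := by
  by_cases hn : f n < n
  · exact ⟨n, le_max_left _ _, ⟨0, Nat.zero_le _, rfl⟩, fun m hm => by
      have := hm.1.trans hm.2
      omega⟩
  have hg : Monotone (fun m => f m + 1) := fun x y h => Nat.add_le_add_right (hf h) 1
  have ha : Monotone (fun i => (fun m => f m + 1)^[i] n) :=
    hg.monotone_iterate_of_le_map (by show n ≤ f n + 1; omega)
  by_contra! hcon
  have hanti : ∀ p q, n ≤ p → p ≤ q → q ≤ phi1 D k n f → s q ≤ s p := by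
    intro p q hp hpq
    induction q, hpq using Nat.le_induction with
    | base => exact fun _ => le_rfl
    | succ q hq ih =>
      intro h
      exact (hdec q ⟨hp.trans hq, by omega⟩).trans (ih (by omega))
  have key : ∀ i ≤ D*(k+1)+1,
      s ((fun m => f m + 1)^[i] n) ≤ D - i * (1/((k:ℝ)+1)) := by
    intro i
    induction i with
    | zero => intro _; simpa using (hs n).2
    | succ i ih =>
      intro hi
      have hle : (fun m => f m + 1)^[i] n ≤ phi2 D k n f :=
        (ha (show i ≤ D*(k+1) by omega)).trans (le_max_right _ _)
      obtain ⟨m, ⟨hm1, hm2⟩, hm⟩ := hcon _ hle ⟨i, by omega, rfl⟩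
      have hna : n ≤ (fun m => f m + 1)^[i] n := ha (Nat.zero_le i)
      have hfa := hf hle
      have ih' := ih (by omega)
      rw [Function.iterate_succ_apply']
      set a := (fun m => f m + 1)^[i] n
      have h1 : s m ≤ s a := hanti a m hna hm1 (by unfold phi1; omega)
      have h2 : s (f a + 1) ≤ s (m+1) :=
        hanti (m+1) (f a + 1) (by omega) (by omega) (by unfold phi1; omega)
      push_cast
      linarith
  have h := key _ le_rfl
  have h0 := (hs ((fun m => f m + 1)^[D*(k+1)+1] n)).1
  have hk : (0:ℝ) < 1/((k:ℝ)+1) := by positivity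
  have hN : ((D*(k+1)+1 : ℕ) : ℝ) * (1/((k:ℝ)+1)) = D + 1/((k:ℝ)+1) := by
    push_cast
    field_simp
  linarith
end

section
/- Let H be a real Hilbert space and A, B : H → Set H monotone operators. Fix u, x₀ ∈ H, (α_n), (λ_n) ⊂ (0,1), (β_n), (μ_n) ⊂ (0,∞) and error sequences (e_n), (e'_n) ⊂ H. Let (x_n) be generated by the method of alternating resolvents with errors, i.e. for all n: (1/β_n)·(α_n u + (1−α_n) x_{2n} + e_n − x_{2n+1}) ∈ A(x_{2n+1}) and (1/μ_n)·(λ_n u + (1−λ_n) x_{2n+1} + e'_n − x_{2n+2}) ∈ B(x_{2n+2}); and let (y_n) be generated by the exact method of alternating resolvents (MAR*) with the same data and y₀ = x₀. Assume A is a rate of divergence for Σ α_n = ∞, E and E' are Cauchy rates for Σ ‖e_n‖ < ∞ and Σ ‖e'_n‖ < ∞ respectively, and M ∈ ℕ satisfies M ≥ Σ_{i=0}^{E(1)} ‖e_i‖ + Σ_{i=0}^{E'(1)} ‖e'_i‖ + 1. Then ρ(k) := max{2ρ₁(2k+1) + 1, 2E(2k+1) + 3} is a rate of convergence for ‖x_n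 − y_n‖ → 0, where ρ₁(k) := A(D(4k+3) + 1 + ⌈ln(4M(k+1))⌉) + 1 and D(k) := max{E(2k+1), E'(2k+1)}. -/
/-!
The resolvent of a monotone operator is nonexpansive (`MonotoneOp.norm_sub_le`), so comparing the two
iterations one double step at a time shows that `s n = ‖x (2n) - y (2n)‖` satisfies
`s (n+1) ≤ (1 - α n) * s n + c n` with `s 0 = 0` and `c n = ‖e n‖ + ‖e' n‖`.

Two consequences of this recursion give the rate. On the one hand `s n ≤ ∑ c i ≤ M`. On the other
hand, restarting at an index `N` past which the tail of `∑ c i` is at most `1/(4(k+1))`, the inequality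
`1 - α ≤ exp (-α)` yields `s n ≤ M * exp (-∑_{N ≤ i < n} α i) + 1/(4(k+1))`
(`le_mul_exp_add_of_recursion`). Since `α i < 1`, the first `N` terms contribute at most `N` to
`∑ α i`, so the rate of divergence evaluated at `N + ⌈log (4M(k+1))⌉` makes the exponential term at
most `1/(4(k+1))` as well. This handles the even indices; an odd index costs one more error `‖e n‖`,
which the Cauchy rate controls.
-/

open scoped RealInnerProductSpace

/-- `(x n)` is generated by the method of alternating resolvents with errors (MAR). -/
def MARerr {H : Type*} [NormedAddCommGroup H] [InnerProductSpace ℝ H]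
    (A B : H → Set H) (u x₀ : H) (α lam β μ : ℕ → ℝ) (e e' x : ℕ → H) : Prop :=
  x 0 = x₀ ∧ ∀ n : ℕ,
    (1 / β n) • (α n • u + (1 - α n) • x (2*n) + e n - x (2*n+1)) ∈ A (x (2*n+1)) ∧
    (1 / μ n) • (lam n • u + (1 - lam n) • x (2*n+1) + e' n - x (2*n+2)) ∈ B (x (2*n+2))

/-- `D(k) = max{E(2k+1), E'(2k+1)}`. -/
def Drate (E E' : ℕ → ℕ) (k : ℕ) : ℕ := max (E (2*k+1)) (E' (2*k+1))

/-- `ρ₁(k) = A(D(4k+3)+1+⌈ln(4M(k+1))⌉)+1`. -/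
noncomputable def rho1 (Ar E E' : ℕ → ℕ) (M k : ℕ) : ℕ :=
  Ar (Drate E E' (4*k+3) + 1 + ⌈Real.log (4*(M:ℝ)*((k:ℝ)+1))⌉₊) + 1

/-- `ρ(k) = max{2ρ₁(2k+1)+1, 2E(2k+1)+3}`. -/
noncomputable def rhoRate (Ar E E' : ℕ → ℕ) (M k : ℕ) : ℕ :=
  max (2 * rho1 Ar E E' M (2*k+1) + 1) (2 * E (2*k+1) + 3)

/-- The resolvent `(1 + b A)⁻¹` of a monotone operator is nonexpansive: here `v` and `v'` are its
values at `p` and `p'`. -/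
lemma MonotoneOp.norm_sub_le {H : Type*} [NormedAddCommGroup H] [InnerProductSpace ℝ H]
    {A : H → Set H} (hA : MonotoneOp A) {b : ℝ} (hb : 0 < b) {p p' v v' : H}
    (hv : (1 / b) • (p - v) ∈ A v) (hv' : (1 / b) • (p' - v') ∈ A v') :
    ‖v - v'‖ ≤ ‖p - p'‖ := by
  have h := hA _ _ _ _ hv hv'
  rw [← smul_sub, inner_smul_right] at h
  have h1 : 0 ≤ ⟪v - v', (p - v) - (p' - v')⟫ :=
    nonneg_of_mul_nonneg_right h (by positivity)
  rw [show (p - v) - (p' - v') = (p - p') - (v - v') by abel, inner_sub_right,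
    real_inner_self_eq_norm_sq] at h1
  have h2 := real_inner_le_norm (v - v') (p - p')
  by_contra! hlt
  nlinarith [norm_nonneg (p - p'), norm_nonneg (v - v')]

/-- One step of the iteration with error `ε` against the exact step, both anchored at `u`. -/
lemma MonotoneOp.step_le {H : Type*} [NormedAddCommGroup H] [InnerProductSpace ℝ H]
    {A : H → Set H} (hA : MonotoneOp A) {b t : ℝ} (hb : 0 < b) (ht : t ≤ 1) {u w w' ε v v' : H}
    (hv : (1 / b) • (t • u + (1 - t) • w + ε - v) ∈ A v)
    (hv' : (1 / b) • (t • u + (1 - t) • w' - v') ∈ A v') :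
    ‖v - v'‖ ≤ (1 - t) * ‖w - w'‖ + ‖ε‖ := by
  refine (hA.norm_sub_le hb hv hv').trans ?_
  rw [show t • u + (1 - t) • w + ε - (t • u + (1 - t) • w') = (1 - t) • (w - w') + ε by
    rw [smul_sub]; abel]
  refine (norm_add_le _ _).trans ?_
  rw [norm_smul, Real.norm_of_nonneg (sub_nonneg.2 ht)]

lemma le_mul_exp_add_of_recursion {s a c : ℕ → ℝ} (ha : ∀ n, a n ∈ Set.Ioo (0 : ℝ) 1)
    (hc : ∀ n, 0 ≤ c n) (hs : ∀ n, s (n + 1) ≤ (1 - a n) * s n + c n)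
    {K : ℝ} (hK : 0 ≤ K) {N : ℕ} (hN : s N ≤ K) {n : ℕ} (hn : N ≤ n) :
    s n ≤ K * Real.exp (-∑ i ∈ Finset.Ico N n, a i) + ∑ i ∈ Finset.Ico N n, c i := by
  induction n, hn using Nat.le_induction with
  | base => simpa using hN
  | succ n hn ih =>
    rw [Finset.sum_Ico_succ_top hn, Finset.sum_Ico_succ_top hn, neg_add, Real.exp_add]
    have h0 := (ha n).1
    have h1 := (ha n).2
    have hC : 0 ≤ ∑ i ∈ Finset.Ico N n, c i := Finset.sum_nonneg fun i _ => hc i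
    have hP : 0 ≤ K * Real.exp (-∑ i ∈ Finset.Ico N n, a i) := by positivity
    have hexp : 1 - a n ≤ Real.exp (-a n) := by linarith [Real.add_one_le_exp (-a n)]
    have h2 := mul_le_mul_of_nonneg_left ih (sub_nonneg.2 h1.le)
    have h3 := mul_le_mul_of_nonneg_left hexp hP
    nlinarith [hs n, mul_nonneg h0.le hC]

/-- A Cauchy rate at `k` bounds every block of terms beyond it, whatever its endpoints. -/
lemma sum_Ico_le_of_cauchyRate {f : ℕ → ℝ} (hf : ∀ n, 0 ≤ f n) {E : ℕ → ℕ}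
    (hE : ∀ k n : ℕ, ∑ i ∈ Finset.Ico (E k + 1) (E k + n + 1), f i ≤ 1 / ((k : ℝ) + 1))
    {k N : ℕ} (hN : E k + 1 ≤ N) (n : ℕ) : ∑ i ∈ Finset.Ico N n, f i ≤ 1 / ((k : ℝ) + 1) :=
  (Finset.sum_le_sum_of_subset_of_nonneg
    (Finset.Ico_subset_Ico hN (by omega)) fun i _ _ => hf i).trans (hE k n)

lemma sum_range_le_of_cauchyRate {f : ℕ → ℝ} (hf : ∀ n, 0 ≤ f n) {E : ℕ → ℕ}
    (hE : ∀ k n : ℕ, ∑ i ∈ Finset.Ico (E k + 1) (E k + n + 1), f i ≤ 1 / ((k : ℝ) + 1))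
    (k n : ℕ) :
    ∑ i ∈ Finset.range n, f i ≤ ∑ i ∈ Finset.range (E k + 1), f i + 1 / ((k : ℝ) + 1) := by
  have h1 : ∑ i ∈ Finset.range n, f i ≤ ∑ i ∈ Finset.range (E k + n + 1), f i :=
    Finset.sum_le_sum_of_subset_of_nonneg
      (Finset.range_subset_range.2 (by omega)) fun i _ _ => hf i
  rw [← Finset.sum_range_add_sum_Ico f (show E k + 1 ≤ E k + n + 1 by omega)] at h1
  linarith [hE k n]

/-- The rate for the even-indexed iterates, as a statement about real sequences. -/
lemma le_of_rho1_le {s a f g : ℕ → ℝ} (ha : ∀ n, a n ∈ Set.Ioo (0 : ℝ) 1)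
    (hf : ∀ n, 0 ≤ f n) (hg : ∀ n, 0 ≤ g n) (hs0 : s 0 = 0)
    (hs : ∀ n, s (n + 1) ≤ (1 - a n) * s n + (f n + g n))
    {Ar : ℕ → ℕ} (hAr : ∀ k n : ℕ, (k : ℝ) ≤ ∑ i ∈ Finset.range (Ar k + n + 1), a i)
    {E E' : ℕ → ℕ}
    (hE : ∀ k n : ℕ, ∑ i ∈ Finset.Ico (E k + 1) (E k + n + 1), f i ≤ 1 / ((k : ℝ) + 1))
    (hE' : ∀ k n : ℕ, ∑ i ∈ Finset.Ico (E' k + 1) (E' k + n + 1), g i ≤ 1 / ((k : ℝ) + 1))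
    {M : ℕ} (hM : (M : ℝ) ≥ ∑ i ∈ Finset.range (E 1 + 1), f i
        + ∑ i ∈ Finset.range (E' 1 + 1), g i + 1)
    {k n : ℕ} (hn : rho1 Ar E E' M k ≤ n) : s n ≤ 1 / ((k : ℝ) + 1) := by
  have hc : ∀ n, 0 ≤ f n + g n := fun n => add_nonneg (hf n) (hg n)
  have hM1 : (1 : ℝ) ≤ M := by
    have h1 := Finset.sum_nonneg fun i (_ : i ∈ Finset.range (E 1 + 1)) => hf i
    have h2 := Finset.sum_nonneg fun i (_ : i ∈ Finset.range (E' 1 + 1)) => hg i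
    linarith
  have hsM : ∀ n, s n ≤ M := by
    intro n
    have h := le_mul_exp_add_of_recursion ha hc hs le_rfl hs0.le (Nat.zero_le n)
    rw [zero_mul, zero_add, Nat.Ico_zero_eq_range, Finset.sum_add_distrib] at h
    have h1 := sum_range_le_of_cauchyRate hf hE 1 n
    have h2 := sum_range_le_of_cauchyRate hg hE' 1 n
    norm_num at h1 h2
    linarith
  set N := Drate E E' (4 * k + 3) + 1 with hNdef
  set L := ⌈Real.log (4 * (M : ℝ) * ((k : ℝ) + 1))⌉₊ with hL
  have hn' : Ar (N + L) + 1 ≤ n := hn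
  have hsum : ((N + L : ℕ) : ℝ) ≤ ∑ i ∈ Finset.range n, a i := by
    have h := hAr (N + L) (n - (Ar (N + L) + 1))
    rwa [show Ar (N + L) + (n - (Ar (N + L) + 1)) + 1 = n by omega] at h
  have hcard : ∀ m, ∑ i ∈ Finset.range m, a i ≤ m := by
    intro m
    simpa using Finset.sum_le_sum fun i (_ : i ∈ Finset.range m) => (ha i).2.le
  -- As each `a i < 1`, a partial sum of size `N + L` needs at least `N` terms.
  have hNn : N ≤ n := by
    have h : N + L ≤ n := by exact_mod_cast hsum.trans (hcard n)
    omega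
  have hk : (0 : ℝ) < (k : ℝ) + 1 := by positivity
  have hlog : Real.log (4 * (M : ℝ) * ((k : ℝ) + 1)) ≤ ∑ i ∈ Finset.Ico N n, a i := by
    have h1 := Nat.le_ceil (Real.log (4 * (M : ℝ) * ((k : ℝ) + 1)))
    rw [← hL] at h1
    rw [← Finset.sum_range_add_sum_Ico a hNn] at hsum
    push_cast at hsum
    linarith [hcard N]
  have hexp : (M : ℝ) * Real.exp (-∑ i ∈ Finset.Ico N n, a i) ≤ 1 / (4 * ((k : ℝ) + 1)) := by
    have hpos : (0 : ℝ) < 4 * (M : ℝ) * ((k : ℝ) + 1) := by positivity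
    calc (M : ℝ) * Real.exp (-∑ i ∈ Finset.Ico N n, a i)
        ≤ M * Real.exp (-Real.log (4 * (M : ℝ) * ((k : ℝ) + 1))) := by gcongr
      _ = 1 / (4 * ((k : ℝ) + 1)) := by
        rw [Real.exp_neg, Real.exp_log hpos]
        field_simp
  have htail : ∑ i ∈ Finset.Ico N n, (f i + g i) ≤ 1 / (4 * ((k : ℝ) + 1)) := by
    rw [Finset.sum_add_distrib]
    have h1 := sum_Ico_le_of_cauchyRate hf hE (k := 2 * (4 * k + 3) + 1) (N := N)
      (Nat.succ_le_succ (le_max_left _ _)) n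
    have h2 := sum_Ico_le_of_cauchyRate hg hE' (k := 2 * (4 * k + 3) + 1) (N := N)
      (Nat.succ_le_succ (le_max_right _ _)) n
    have h3 : 1 / (((2 * (4 * k + 3) + 1 : ℕ) : ℝ) + 1) = 1 / (4 * ((k : ℝ) + 1)) / 2 := by
      push_cast
      field_simp
      ring
    rw [h3] at h1 h2
    linarith
  have h := le_mul_exp_add_of_recursion ha hc hs (by positivity) (hsM N) hNn
  have h4 : 1 / (4 * ((k : ℝ) + 1)) = 1 / ((k : ℝ) + 1) / 4 := by
    field_simp
  have h5 : 0 < 1 / ((k : ℝ) + 1) := by positivity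
  linarith

theorem stmt18 {H : Type*} [NormedAddCommGroup H] [InnerProductSpace ℝ H]
    (A B : H → Set H) (hA : MonotoneOp A) (hB : MonotoneOp B)
    (u x₀ : H) (α lam β μ : ℕ → ℝ)
    (hα : ∀ n, α n ∈ Set.Ioo (0:ℝ) 1) (hlam : ∀ n, lam n ∈ Set.Ioo (0:ℝ) 1)
    (hβ : ∀ n, 0 < β n) (hμ : ∀ n, 0 < μ n)
    (e e' : ℕ → H) (x : ℕ → H) (hx : MARerr A B u x₀ α lam β μ e e' x)
    (y : ℕ → H) (hy : MAR A B u x₀ α lam β μ y)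
    (Ar : ℕ → ℕ)
    (hAr : ∀ k n : ℕ, (k : ℝ) ≤ ∑ i ∈ Finset.range (Ar k + n + 1), α i)
    (E E' : ℕ → ℕ)
    (hE : ∀ k n : ℕ, ∑ i ∈ Finset.Ico (E k + 1) (E k + n + 1), ‖e i‖ ≤ 1/((k:ℝ)+1))
    (hE' : ∀ k n : ℕ, ∑ i ∈ Finset.Ico (E' k + 1) (E' k + n + 1), ‖e' i‖ ≤ 1/((k:ℝ)+1))
    (M : ℕ)
    (hM : (M:ℝ) ≥ ∑ i ∈ Finset.range (E 1 + 1), ‖e i‖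
        + ∑ i ∈ Finset.range (E' 1 + 1), ‖e' i‖ + 1) :
    ∀ k : ℕ, ∀ n ≥ rhoRate Ar E E' M k, ‖x n - y n‖ ≤ 1/((k:ℝ)+1) := by
  have hodd : ∀ n, ‖x (2 * n + 1) - y (2 * n + 1)‖
      ≤ (1 - α n) * ‖x (2 * n) - y (2 * n)‖ + ‖e n‖ := fun n =>
    hA.step_le (hβ n) (hα n).2.le (hx.2 n).1 (hy.2 n).1
  have hrec : ∀ n, ‖x (2 * (n + 1)) - y (2 * (n + 1))‖
      ≤ (1 - α n) * ‖x (2 * n) - y (2 * n)‖ + (‖e n‖ + ‖e' n‖) := by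
    intro n
    have h1 : ‖x (2 * (n + 1)) - y (2 * (n + 1))‖
        ≤ (1 - lam n) * ‖x (2 * n + 1) - y (2 * n + 1)‖ + ‖e' n‖ :=
      hB.step_le (hμ n) (hlam n).2.le (hx.2 n).2 (hy.2 n).2
    have h2 := mul_nonneg (hlam n).1.le (norm_nonneg (x (2 * n + 1) - y (2 * n + 1)))
    linarith [hodd n]
  have heven : ∀ k n, rho1 Ar E E' M k ≤ n → ‖x (2 * n) - y (2 * n)‖ ≤ 1 / ((k : ℝ) + 1) :=
    fun k n hn => le_of_rho1_le (s := fun n => ‖x (2 * n) - y (2 * n)‖) hα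
      (fun n => norm_nonneg (e n)) (fun n => norm_nonneg (e' n))
      (by simp [hx.1, hy.1]) hrec hAr hE hE' hM hn
  intro k n hn
  have hn1 : 2 * rho1 Ar E E' M (2 * k + 1) + 1 ≤ n := (le_max_left _ _).trans hn
  have hn2 : 2 * E (2 * k + 1) + 3 ≤ n := (le_max_right _ _).trans hn
  have hhalf : 1 / (((2 * k + 1 : ℕ) : ℝ) + 1) = 1 / ((k : ℝ) + 1) / 2 := by
    push_cast
    field_simp
    ring
  have hpos : 0 < 1 / ((k : ℝ) + 1) := by positivity
  obtain ⟨m, rfl | rfl⟩ := Nat.even_or_odd' n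
  · have h := heven (2 * k + 1) m (by omega)
    rw [hhalf] at h
    linarith
  · have h := heven (2 * k + 1) m (by omega)
    have h1 := sum_Ico_le_of_cauchyRate (fun n => norm_nonneg (e n)) hE (k := 2 * k + 1)
      (N := m) (by omega) (m + 1)
    rw [Nat.Ico_succ_singleton, Finset.sum_singleton, hhalf] at h1
    rw [hhalf] at h
    have h2 := mul_nonneg (hα m).1.le (norm_nonneg (x (2 * m) - y (2 * m)))
    linarith [hodd m]
end
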